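/- arXiv:2304.06432 — 2 statements merged into one kernel-verified Lean document; each statement's English description precedes it below -/
import Mathlib

section
/- Let k be a field of characteristic zero and X = {1, 2} with 1 ≺ 2. In the free algebra k⟨X⟩, for all i, j ≥ 0: SH_{i,j}(E(2), E(1)) = Σ ((i+j)! / (t₁!⋯tₙ!)) · ∏_{m=1}^{n} (C(α_m)·E(α_m) / |α_m|!)^{t_m}, where the sum is over all n ≥ 0, all strictly decreasing tuples α₁ ≻ α₂ ≻ ⋯ ≻ αₙ of Lyndon words over X, and all tuples of positive integers (t₁, …, tₙ) such that Σ_{m=1}^{n} t_m·α_m(2) = i and Σ_{m=1}^{n} t_m·α_m(1) = j, and the product ∏_{m=1}^{n} is taken in this decreasing order of the α_m. -/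
/-- A nonempty word over a linearly ordered alphabet is a Lyndon word if it is
strictly lexicographically smaller than every nontrivial rotation of itself
(vacuously true for single letters). -/
def IsLyndon {X : Type*} [LinearOrder X] (w : List X) : Prop :=
  w ≠ [] ∧ ∀ u v : List X, u ≠ [] → v ≠ [] → w = u ++ v → List.Lex (· < ·) w (v ++ u)

/-- The shuffle type polynomials `SH_{i,j}(u,v)`: the sum of all products of `i`
copies of `u` and `j` copies of `v`. -/
def SH {A : Type*} [Ring A] (u v : A) : ℕ → ℕ → A
  | 0, 0 => 1
  | i + 1, 0 => u * SH u v i 0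
  | 0, j + 1 => v * SH u v 0 j
  | i + 1, j + 1 => u * SH u v i (j + 1) + v * SH u v (i + 1) j

namespace LynAux

variable {X : Type*} [LinearOrder X]

theorem lt_app (a b : List X) (hb : b ≠ []) : a < a ++ b := by
  induction a with
  | nil => cases b with
    | nil => exact absurd rfl hb
    | cons x b => exact List.Lex.nil
  | cons x a ih => exact List.Lex.cons ih

theorem le_app (a b : List X) : a ≤ a ++ b := by
  by_cases hb : b = []
  · simp [hb]
  · exact (lt_app a b hb).le

theorem app_lt_app {a b c : List X} : a ++ b < a ++ c ↔ b < c := by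
  induction a with
  | nil => simp
  | cons x a ih => simp only [List.cons_append, List.cons_lt_cons_iff, lt_irrefl, true_and, false_or, ih]

theorem lt_cases {a b : List X} (h : a < b) :
    (∃ t, t ≠ [] ∧ b = a ++ t) ∨ ∀ c d : List X, a ++ c < b ++ d := by
  change List.Lex (· < ·) a b at h
  induction h with
  | nil => left; exact ⟨_, by simp, rfl⟩
  | cons h ih =>
    rcases ih with ⟨t, ht, rfl⟩ | ih
    · left; exact ⟨t, ht, rfl⟩
    · right; intro c d; exact List.Lex.cons (ih c d)
  | rel h => right; intro c d; exact List.Lex.rel h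

theorem lyn_iff (w : List X) : IsLyndon w ↔
    w ≠ [] ∧ ∀ u v : List X, u ≠ [] → v ≠ [] → w = u ++ v → w < v := by
  constructor
  · rintro ⟨h0, h⟩
    refine ⟨h0, fun u v hu hv e => ?_⟩
    by_contra hlt
    have hle : v ≤ w := not_lt.1 hlt
    have hne : v ≠ w := by
      rintro rfl
      have := congrArg List.length e
      simp at this
      exact hu this
    have h1 : w < v ++ u := h u v hu hv e
    rcases lt_cases (lt_of_le_of_ne hle hne) with ⟨t, ht, e2⟩ | h2
    · have h3 : w < t ++ v := h v t hv ht e2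
      rw [e2, app_lt_app] at h1
      have hlen : u.length = t.length := by
        have := congrArg List.length (e.symm.trans e2)
        simp at this; omega
      rcases lt_cases h1 with ⟨s, hs, e3⟩ | h4
      · have := congrArg List.length e3
        simp at this
        have := List.length_pos_iff.2 hs
        omega
      · have h5 := h4 v v
        rw [← e] at h5
        exact lt_asymm h3 h5
    · have := h2 u []
      simp at this
      exact lt_asymm h1 this
  · rintro ⟨h0, h⟩
    exact ⟨h0, fun u v hu hv e => lt_of_lt_of_le (h u v hu hv e) (le_app v u)⟩

theorem lyn_ne {w : List X} (h : IsLyndon w) : w ≠ [] := h.1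

theorem lyn_lt {u v : List X} (h : IsLyndon (u ++ v)) (hu : u ≠ []) (hv : v ≠ []) :
    u ++ v < v := ((lyn_iff _).1 h).2 u v hu hv rfl

theorem lyn_single (x : X) : IsLyndon [x] := by
  rw [lyn_iff]
  refine ⟨by simp, fun u v hu hv e => ?_⟩
  have := congrArg List.length e
  have h1 := List.length_pos_iff.2 hu
  have h2 := List.length_pos_iff.2 hv
  simp at this; omega

theorem prod_lt {l m : List X} (hl : l ≠ []) (hm : IsLyndon m) (h : l < m) : l ++ m < m := by
  rcases lt_cases h with ⟨t, ht, rfl⟩ | h2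
  · rw [app_lt_app]; exact lyn_lt hm hl ht
  · simpa using h2 m []

theorem lyn_prod {l m : List X} (hl : IsLyndon l) (hm : IsLyndon m) (h : l < m) :
    IsLyndon (l ++ m) := by
  rw [lyn_iff]
  refine ⟨by simp [hl.1], fun u v hu hv e => ?_⟩
  have hlm := prod_lt hl.1 hm h
  rcases List.append_eq_append_iff.1 e with ⟨a, rfl, e2⟩ | ⟨a, e1, rfl⟩
  · by_cases ha : a = []
    · subst ha
      simp at e2; subst e2; exact hlm
    · subst e2
      exact hlm.trans (lyn_lt hm ha hv)
  · by_cases ha : a = []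
    · subst ha
      simpa using hlm
    · subst e1
      have h1 := lyn_lt hl hu ha
      rcases lt_cases h1 with ⟨t, ht, e3⟩ | h2
      · have := congrArg List.length e3
        have := List.length_pos_iff.2 hu
        simp at *; omega
      · exact h2 m m

/-- all proper nonempty suffixes of `l` are `≥ b` -/
def SufGE (l b : List X) : Prop := ∀ u v : List X, u ≠ [] → v ≠ [] → l = u ++ v → b ≤ v

theorem lyn_sufGE {b : List X} (h : IsLyndon b) : SufGE b b := fun u v hu hv e => by
  subst e; exact (lyn_lt h hu hv).le

theorem sufGE_app {l b : List X} (hb : IsLyndon b) (hs : SufGE l b) : SufGE (l ++ b) b := by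
  intro u v hu hv e
  rcases List.append_eq_append_iff.1 e with ⟨a, rfl, e2⟩ | ⟨a, e1, rfl⟩
  · by_cases ha : a = []
    · subst ha; simp at e2; exact e2.le
    · exact lyn_sufGE hb a v ha hv e2
  · by_cases ha : a = []
    · subst ha; simp
    · exact (hs u a hu ha e1).trans (le_app _ _)

theorem std_app {l b : List X} (hs : SufGE l b) (hb : b ≠ []) :
    ∀ δ β' : List X, l ++ b = β' ++ δ → β' ≠ [] → IsLyndon δ → δ.length ≤ b.length := by
  intro δ β' e hβ hδ
  by_contra hlen
  rcases List.append_eq_append_iff.1 e with ⟨a, rfl, e2⟩ | ⟨a, e1, rfl⟩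
  · subst e2; simp at hlen
  · by_cases ha : a = []
    · subst ha; simp at hlen
    · have h1 := lyn_lt hδ ha hb
      have h2 := hs β' a hβ ha e1
      exact absurd (h1.trans_le (h2.trans (le_app a b))) (lt_irrefl _)

/-- stripping -/
theorem strip {l b : List X} (hl : l ≠ []) (hb : IsLyndon b) (hlb : l ++ b < b)
    (hs : SufGE (l ++ b) b) : IsLyndon l ∧ l < b ∧ SufGE l b := by
  have hlt : l < b := (le_app l b).trans_lt hlb
  have hS : SufGE l b := by
    intro u v hu hv e
    subst e
    have h1 : b ≤ v ++ b := hs u (v ++ b) hu (by simp [hv]) (by simp)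
    by_contra hlt2
    rw [not_le] at hlt2
    rcases lt_cases hlt2 with ⟨t, ht, e⟩ | h2
    · subst e
      have h3 := lyn_lt hb hv ht
      have := app_lt_app (a := v).2 h3
      exact absurd h1 (not_le.2 (by simpa using (app_lt_app (a := v)).2 h3))
    · have := h2 b []
      simp at this
      exact absurd h1 (not_le.2 this)
  refine ⟨(lyn_iff _).2 ⟨hl, fun u v hu hv e => hlt.trans_le (hS u v hu hv e)⟩, hlt, hS⟩

/-- `l` followed by `k` copies of `b` -/
def ap (l b : List X) : ℕ → List X
  | 0 => l
  | n + 1 => ap l b n ++ b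

theorem ap_eq (l b : List X) (n : ℕ) : ap l b n = l ++ (List.replicate n b).flatten := by
  induction n with
  | zero => simp [ap]
  | succ n ih => rw [ap, ih, List.replicate_succ']; simp

theorem ap_length (l b : List X) (n : ℕ) : (ap l b n).length = l.length + n * b.length := by
  rw [ap_eq]; simp

theorem ap_prop {l b : List X} (hl : IsLyndon l) (hb : IsLyndon b) (h : l < b) (hs : SufGE l b)
    (n : ℕ) : IsLyndon (ap l b n) ∧ ap l b n < b ∧ SufGE (ap l b n) b := by
  induction n with
  | zero => exact ⟨hl, h, hs⟩
  | succ n ih =>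
    obtain ⟨h1, h2, h3⟩ := ih
    exact ⟨lyn_prod h1 hb h2, prod_lt h1.1 hb h2, sufGE_app hb h3⟩

theorem ap_exists {b : List X} (hb : IsLyndon b) (n : ℕ) : ∀ l : List X, l.length ≤ n →
    IsLyndon l → l < b → SufGE l b →
    ∃ l₀ k, l = ap l₀ b k ∧ IsLyndon l₀ ∧ l₀ < b ∧ SufGE l₀ b ∧ ∀ u, u ≠ [] → l₀ ≠ u ++ b := by
  induction n with
  | zero =>
    intro l hn hl
    have := List.length_pos_iff.2 hl.1
    omega
  | succ n ih =>
    intro l hn hl hlb hs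
    by_cases hx : ∃ u, u ≠ [] ∧ l = u ++ b
    · obtain ⟨u, hu, rfl⟩ := hx
      obtain ⟨h1, h2, h3⟩ := strip hu hb hlb hs
      have := List.length_pos_iff.2 hb.1
      obtain ⟨l₀, k, e, h4⟩ := ih u (by simp at hn; omega) h1 h2 h3
      exact ⟨l₀, k + 1, by rw [ap, e], h4⟩
    · push Not at hx
      exact ⟨l, 0, rfl, hl, hlb, hs, hx⟩

theorem ap_inj {b l l' : List X} (hl : l ≠ []) (hl' : l' ≠ []) (h : ∀ u, u ≠ [] → l ≠ u ++ b)
    (h' : ∀ u, u ≠ [] → l' ≠ u ++ b) : ∀ n n' : ℕ, ap l b n = ap l' b n' → l = l' ∧ n = n' := by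
  have hne : ∀ (l : List X), l ≠ [] → ∀ n, ap l b n ≠ [] := by
    intro l hl n; rw [ap_eq]; simp [hl]
  intro n
  induction n with
  | zero =>
    intro n' e
    cases n' with
    | zero => exact ⟨e, rfl⟩
    | succ n' => exact absurd e (h _ (hne _ hl' _))
  | succ n ih =>
    intro n' e
    cases n' with
    | zero => exact absurd e.symm (h' _ (hne _ hl _))
    | succ n' =>
      have := ih n' (List.append_cancel_right e)
      exact ⟨this.1, by rw [this.2]⟩

/-- minimal suffix -/
theorem min_suffix (w : List X) (hw : w ≠ []) : ∃ u v, w = u ++ v ∧ IsLyndon v ∧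
    ∀ u' v', v' ≠ [] → w = u' ++ v' → v ≤ v' := by
  have hne : w ∈ w.tails.toFinset.filter (· ≠ []) := by
    simp [hw]
  obtain ⟨v, hv, hmin⟩ := Finset.exists_min_image (w.tails.toFinset.filter (· ≠ [])) id ⟨w, hne⟩
  simp at hv hmin
  obtain ⟨⟨u, rfl⟩, hv0⟩ := hv
  refine ⟨u, v, rfl, ?_, fun u' v' hv' e => hmin v' ⟨u', e.symm⟩ hv'⟩
  rw [lyn_iff]
  refine ⟨hv0, fun a b ha hb e => lt_of_le_of_ne (hmin b ⟨u ++ a, by simp [e]⟩ hb) ?_⟩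
  rintro rfl
  have := congrArg List.length e
  simp at this
  exact ha this

theorem sufGE_of_lyn {l b : List X}
    (h : ∀ u v : List X, u ≠ [] → IsLyndon v → l = u ++ v → b ≤ v) : SufGE l b := by
  intro u v hu hv e
  obtain ⟨a, c, e2, hc, hm⟩ := min_suffix v hv
  subst e2
  exact (h (u ++ a) c (by simp [hu]) hc (by simp [e])).trans (hm [] _ hv rfl)

/-- the word spelled by a list of pairs -/
def flat (L : List (List X × ℕ)) : List X :=
  (L.map fun p => (List.replicate p.2 p.1).flatten).flatten

def Good (L : List (List X × ℕ)) : Prop :=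
  (∀ p ∈ L, IsLyndon p.1 ∧ 1 ≤ p.2) ∧ L.Pairwise (fun p q => q.1 < p.1)

theorem flat_append (L M : List (List X × ℕ)) : flat (L ++ M) = flat L ++ flat M := by
  simp [flat]

theorem flat_single (p : List X × ℕ) : flat [p] = (List.replicate p.2 p.1).flatten := by
  simp [flat]

theorem cfl (n : ℕ) : ∀ w : List X, w.length ≤ n → ∃ L, Good L ∧ flat L = w := by
  induction n with
  | zero =>
    intro w hw
    refine ⟨[], ⟨by simp, by simp⟩, ?_⟩
    simp at hw; simp [flat, hw]
  | succ n ih =>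
    intro w hw
    by_cases h0 : w = []
    · exact ⟨[], ⟨by simp, by simp⟩, by simp [flat, h0]⟩
    obtain ⟨u, v, rfl, hv, hm⟩ := min_suffix w h0
    have := List.length_pos_iff.2 hv.1
    obtain ⟨L, hL, rfl⟩ := ih u (by simp at hw; omega)
    rcases List.eq_nil_or_concat L with rfl | ⟨L', ⟨α, t⟩, rfl⟩
    · exact ⟨[(v, 1)], ⟨by simp [hv], by simp⟩, by simp [flat]⟩
    simp only [List.concat_eq_append] at *
    obtain ⟨hL1, hL2⟩ := hL
    have hα := hL1 (α, t) (by simp)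
    rw [List.pairwise_append] at hL2
    have hge : v ≤ α := by
      by_contra hlt
      rw [not_le] at hlt
      have h1 := prod_lt hα.1.1 hv hlt
      obtain ⟨s, rfl⟩ : ∃ s, t = s + 1 := ⟨t - 1, by have := hα.2; simp at this; omega⟩
      have := hm (flat L' ++ (List.replicate s α).flatten) (α ++ v) (by simp [hv.1])
        (by rw [flat_append, flat_single, List.replicate_succ']; simp)
      exact absurd this (not_le.2 h1)
    rcases hge.eq_or_lt with rfl | hlt
    · refine ⟨L' ++ [(v, t + 1)], ⟨?_, ?_⟩, ?_⟩
      · intro p hp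
        simp at hp
        rcases hp with hp | rfl
        · exact hL1 p (by simp [hp])
        · exact ⟨hv, by simp⟩
      · rw [List.pairwise_append]
        refine ⟨hL2.1, by simp, ?_⟩
        intro a ha b hb
        simp at hb; subst hb
        exact hL2.2.2 a ha (v, t) (by simp)
      · rw [flat_append, flat_single, flat_append, flat_single, List.replicate_succ']; simp
    · refine ⟨L' ++ [(α, t)] ++ [(v, 1)], ⟨?_, ?_⟩, ?_⟩
      · intro p hp
        rw [List.mem_append] at hp
        rcases hp with hp | hp
        · exact hL1 p hp
        · simp at hp; subst hp; exact ⟨hv, by simp⟩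
      · rw [List.pairwise_append]
        refine ⟨List.pairwise_append.2 hL2, by simp, ?_⟩
        intro a ha b hb
        simp at hb; subst hb
        simp at ha
        rcases ha with ha | rfl
        · exact hlt.trans (hL2.2.2 a ha (α, t) (by simp))
        · exact hlt
      · rw [flat_append, flat_single]; simp

/-- factorization all of whose factors are `> b` -/
theorem cfl_gt {x : X} {w b : List X} (hs : SufGE (x :: w) b) (hn : ∀ u, u ≠ [] → x :: w ≠ u ++ b) :
    ∃ L, Good L ∧ flat L = w ∧ ∀ p ∈ L, b < p.1 := by
  obtain ⟨L, hL, rfl⟩ := cfl w.length w le_rfl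
  refine ⟨L, hL, rfl, ?_⟩
  rcases List.eq_nil_or_concat L with rfl | ⟨L', ⟨α, t⟩, rfl⟩
  · simp
  simp only [List.concat_eq_append] at *
  obtain ⟨hL1, hL2⟩ := hL
  have hα := hL1 (α, t) (by simp)
  rw [List.pairwise_append] at hL2
  obtain ⟨s, rfl⟩ : ∃ s, t = s + 1 := ⟨t - 1, by have := hα.2; simp at this; omega⟩
  have e : x :: flat (L' ++ [(α, s + 1)]) = (x :: (flat L' ++ (List.replicate s α).flatten)) ++ α := by
    rw [flat_append, flat_single, List.replicate_succ']; simp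
  have h1 : b ≤ α := hs _ α (by simp) hα.1.1 e
  have h2 : b < α := lt_of_le_of_ne h1 (by rintro rfl; exact hn _ (by simp) e)
  intro p hp
  simp at hp
  rcases hp with hp | rfl
  · exact h2.trans (hL2.2.2 p hp (α, s + 1) (by simp))
  · exact h2

end LynAux
namespace LynAux

open MvPowerSeries

section alg
variable {k : Type*} [Field k] {A : Type*} [Ring A] [Algebra k A]

/-- congruence up to degree `N` -/
def Cong (N : ℕ) (f g : MvPowerSeries (Fin 2) A) : Prop :=
  ∀ n : Fin 2 →₀ ℕ, n.degree ≤ N → coeff n f = coeff n g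

theorem Cong.refl {N : ℕ} (f : MvPowerSeries (Fin 2) A) : Cong N f f := fun _ _ => rfl

theorem Cong.symm {N : ℕ} {f g : MvPowerSeries (Fin 2) A} (h : Cong N f g) : Cong N g f :=
  fun n hn => (h n hn).symm

theorem Cong.trans {N : ℕ} {f g h : MvPowerSeries (Fin 2) A} (h1 : Cong N f g) (h2 : Cong N g h) :
    Cong N f h := fun n hn => (h1 n hn).trans (h2 n hn)

theorem Cong.add {N : ℕ} {f g f' g' : MvPowerSeries (Fin 2) A} (h1 : Cong N f g)
    (h2 : Cong N f' g') : Cong N (f + f') (g + g') := fun n hn => by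
  rw [map_add, map_add, h1 n hn, h2 n hn]

theorem Cong.sum {N : ℕ} {ι : Type*} (s : Finset ι) {f g : ι → MvPowerSeries (Fin 2) A}
    (h : ∀ i ∈ s, Cong N (f i) (g i)) : Cong N (∑ i ∈ s, f i) (∑ i ∈ s, g i) := fun n hn => by
  rw [map_sum, map_sum]
  exact Finset.sum_congr rfl fun i hi => h i hi n hn

theorem Cong.mul {N : ℕ} {f g f' g' : MvPowerSeries (Fin 2) A} (h1 : Cong N f g)
    (h2 : Cong N f' g') : Cong N (f * f') (g * g') := fun n hn => by
  rw [coeff_mul, coeff_mul]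
  refine Finset.sum_congr rfl fun p hp => ?_
  rw [Finset.HasAntidiagonal.mem_antidiagonal] at hp
  have : p.1.degree + p.2.degree = n.degree := by rw [← hp, map_add]
  rw [h1 _ (by omega), h2 _ (by omega)]

theorem coeff_ksmul (a : k) (n : Fin 2 →₀ ℕ) (f : MvPowerSeries (Fin 2) A) :
    coeff n (a • f) = a • coeff n f := rfl

theorem Cong.smul {N : ℕ} (a : k) {f g : MvPowerSeries (Fin 2) A} (h1 : Cong N f g) :
    Cong N (a • f) (a • g) := fun n hn => by
  rw [coeff_ksmul, coeff_ksmul, h1 n hn]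

theorem cong_monomial {N : ℕ} {m : Fin 2 →₀ ℕ} (h : N < m.degree) (a : A) :
    Cong N (monomial m a) 0 := fun n hn => by
  rw [coeff_monomial, if_neg, map_zero]
  rintro rfl; omega

/-- Euler operator -/
noncomputable def eul (f : MvPowerSeries (Fin 2) A) : MvPowerSeries (Fin 2) A := fun n => n.degree • coeff n f

theorem coeff_eul (n : Fin 2 →₀ ℕ) (f : MvPowerSeries (Fin 2) A) :
    coeff n (eul f) = n.degree • coeff n f := rfl

theorem eul_mul (f g : MvPowerSeries (Fin 2) A) : eul (f * g) = eul f * g + f * eul g := by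
  ext n
  rw [coeff_eul, map_add, coeff_mul, coeff_mul, coeff_mul, Finset.smul_sum,
    ← Finset.sum_add_distrib]
  refine Finset.sum_congr rfl fun p hp => ?_
  rw [Finset.HasAntidiagonal.mem_antidiagonal] at hp
  rw [← hp, map_add, coeff_eul, coeff_eul, add_smul, smul_mul_assoc, mul_smul_comm]

theorem eul_sum {ι : Type*} (s : Finset ι) (f : ι → MvPowerSeries (Fin 2) A) :
    eul (∑ i ∈ s, f i) = ∑ i ∈ s, eul (f i) := by
  ext n; simp [coeff_eul, Finset.smul_sum]

theorem eul_smul (a : k) (f : MvPowerSeries (Fin 2) A) : eul (a • f) = a • eul f := by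
  ext n; rw [coeff_eul, coeff_ksmul, coeff_ksmul, coeff_eul, smul_comm]

theorem eul_monomial (m : Fin 2 →₀ ℕ) (a : A) :
    eul (monomial m a) = m.degree • monomial m a := by
  ext n
  rw [coeff_eul, map_nsmul, coeff_monomial]
  split_ifs with h
  · rw [h]
  · simp

theorem mono_pow (m : Fin 2 →₀ ℕ) (a : A) (t : ℕ) :
    (monomial m a) ^ t = monomial (t • m) (a ^ t) := by
  induction t with
  | zero => simp
  | succ t ih => rw [pow_succ, ih, monomial_mul_monomial, pow_succ, succ_nsmul]

/-- divided powers -/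
def dp {R : Type*} [Ring R] [Algebra k R] (c : k) (P : R) (m : ℕ) : R :=
  (c ^ m / (m.factorial : k)) • P ^ m

theorem pow_comm {R : Type*} [Ring R] (y : ℕ → R) (P : R)
    (h : ∀ r, y r * P = P * y r + y (r + 1)) (m : ℕ) : ∀ r, y r * P ^ m =
      ∑ ij ∈ Finset.HasAntidiagonal.antidiagonal m, m.choose ij.1 • (P ^ ij.1 * y (r + ij.2)) := by
  induction m with
  | zero => intro r; simp
  | succ m ih =>
    intro r
    rw [Finset.sum_antidiagonal_choose_succ_nsmul (fun i j => P ^ i * y (r + j)), pow_succ',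
      ← mul_assoc, h, add_mul, mul_assoc, ih, ih, add_comm]
    congr 1
    · refine Finset.sum_congr rfl fun p _ => ?_
      rw [add_right_comm, add_assoc]
    · rw [Finset.mul_sum]
      refine Finset.sum_congr rfl fun p hp => ?_
      rw [Finset.HasAntidiagonal.mem_antidiagonal] at hp
      rw [mul_smul_comm, ← mul_assoc, ← pow_succ', Nat.choose_symm_of_eq_add hp.symm]

theorem dp_comm [CharZero k] {R : Type*} [Ring R] [Algebra k R] (y : ℕ → R) (P : R) (c : k)
    (h : ∀ r, y r * P = P * y r + y (r + 1)) (m : ℕ) : y 0 * dp c P m =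
      ∑ ij ∈ Finset.HasAntidiagonal.antidiagonal m,
        dp c P ij.1 * ((c ^ ij.2 / (ij.2.factorial : k)) • y ij.2) := by
  rw [dp, mul_smul_comm, pow_comm y P h, Finset.smul_sum]
  refine Finset.sum_congr rfl fun p hp => ?_
  rw [Finset.HasAntidiagonal.mem_antidiagonal] at hp
  rw [dp, smul_mul_smul_comm, zero_add, ← Nat.cast_smul_eq_nsmul k, smul_smul, ← hp]
  congr 1
  have h1 : ((p.1 + p.2).factorial : k) = (p.1 + p.2).choose p.1 * p.1.factorial * p.2.factorial := by
    rw [← Nat.add_choose_mul_factorial_mul_factorial]; push_cast; first | rfl | rw [Nat.choose_symm_add]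
  have h2 : (p.1.factorial : k) ≠ 0 := by exact_mod_cast p.1.factorial_ne_zero
  have h3 : (p.2.factorial : k) ≠ 0 := by exact_mod_cast p.2.factorial_ne_zero
  have h4 : ((p.1 + p.2).factorial : k) ≠ 0 := by exact_mod_cast (p.1+p.2).factorial_ne_zero
  have h5 : ((p.1 + p.2).choose p.1 : k) ≠ 0 := by
    intro h; rw [h] at h1; simp at h1; exact h4 (by exact_mod_cast h1)
  rw [h1]; field_simp; ring

theorem sum_anti {M : Type*} [AddCommMonoid M] (N : ℕ) (f : ℕ × ℕ → M) :
    ∑ m ∈ Finset.range (N + 1), ∑ ij ∈ Finset.HasAntidiagonal.antidiagonal m, f ij =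
    ∑ ij ∈ (Finset.range (N + 1) ×ˢ Finset.range (N + 1)) with ij.1 + ij.2 ≤ N, f ij := by
  rw [Finset.sum_sigma']
  refine Finset.sum_bij' (fun x _ => x.2) (fun x _ => ⟨x.1 + x.2, x⟩) ?_ ?_ ?_ ?_ ?_
  · rintro ⟨m, p⟩ h; simp at h ⊢; omega
  · rintro ⟨a, b⟩ h; simp at h ⊢; omega
  · rintro ⟨m, p⟩ h; simp at h ⊢; exact h.2
  · rintro ⟨a, b⟩ h; rfl
  · rintro ⟨a, b⟩ h; rfl

/-- content of a word -/
noncomputable def cont (w : List (Fin 2)) : Fin 2 →₀ ℕ := (w.map fun x => Finsupp.single x 1).sum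

theorem cont_append (u v : List (Fin 2)) : cont (u ++ v) = cont u + cont v := by simp [cont]

theorem cont_degree (w : List (Fin 2)) : (cont w).degree = w.length := by
  induction w with
  | nil => simp [cont]
  | cons x w ih =>
    have : cont (x :: w) = Finsupp.single x 1 + cont w := by simp [cont]
    rw [this, map_add, ih]; simp [Finsupp.degree_single]; omega

theorem cont_apply (w : List (Fin 2)) (x : Fin 2) : cont w x = w.count x := by
  induction w with
  | nil => simp [cont]
  | cons y w ih =>
    have : cont (y :: w) = Finsupp.single y 1 + cont w := by simp [cont]
    rw [this, Finsupp.add_apply, ih, List.count_cons, Finsupp.single_apply, add_comm]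
    simp

/-- monomials -/
noncomputable def pp (E : List (Fin 2) → A) (l : List (Fin 2)) : MvPowerSeries (Fin 2) A :=
  monomial (cont l) (E l)

def cc (C : List (Fin 2) → k) (l : List (Fin 2)) : k := C l / (l.length.factorial : k)

def dd (C : List (Fin 2) → k) (l : List (Fin 2)) : k := l.length * cc C l

noncomputable def ee (E : List (Fin 2) → A) (C : List (Fin 2) → k) (N : ℕ) (b : List (Fin 2)) :
    MvPowerSeries (Fin 2) A := ∑ m ∈ Finset.range (N + 1), dp (cc C b) (pp E b) m

theorem dp_pp (E : List (Fin 2) → A) (c : k) (b : List (Fin 2)) (m : ℕ) :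
    dp c (pp E b) m = monomial (m • cont b) ((c ^ m / (m.factorial : k)) • E b ^ m) := by
  rw [dp, pp, mono_pow]
  ext n
  rw [coeff_ksmul, coeff_monomial, coeff_monomial]
  split_ifs <;> simp

theorem dp_cong {E : List (Fin 2) → A} {c : k} {b : List (Fin 2)} {m N : ℕ}
    (h : N < m * b.length) : Cong N (dp c (pp E b) m) 0 := by
  rw [dp_pp]
  apply cong_monomial
  rw [map_nsmul, cont_degree]; simpa using h

/-- commuting past an exponential -/
theorem step_comm [CharZero k] (E : List (Fin 2) → A) (C : List (Fin 2) → k) (N : ℕ)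
    (l b : List (Fin 2)) (hl : l ≠ []) (hb : b ≠ [])
    (h : ∀ r, E (ap l b (r + 1)) = E (ap l b r) * E b - E b * E (ap l b r)) :
    Cong N (pp E l * ee E C N b) (ee E C N b *
      ∑ r ∈ Finset.range (N + 1), (cc C b ^ r / (r.factorial : k)) • pp E (ap l b r)) := by
  have hy : ∀ r, pp E (ap l b r) * pp E b = pp E b * pp E (ap l b r) + pp E (ap l b (r + 1)) := by
    intro r
    rw [pp, pp, pp, monomial_mul_monomial, monomial_mul_monomial, add_comm (cont b)]
    have : cont (ap l b (r + 1)) = cont (ap l b r) + cont b := by rw [ap, cont_append]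
    rw [this, ← map_add, h]; congr 1; abel
  have h1 := dp_comm (fun r => pp E (ap l b r)) (pp E b) (cc C b) hy
  simp only [ap] at h1
  rw [ee, Finset.mul_sum, Finset.sum_congr rfl (fun m _ => h1 m), sum_anti,
    Finset.sum_mul_sum, ← Finset.sum_product']
  refine Cong.trans ?_ (Cong.symm (fun n hn => congrArg (coeff n) (Finset.sum_filter_add_sum_filter_not
    (Finset.range (N + 1) ×ˢ Finset.range (N + 1)) (fun ij : ℕ × ℕ => ij.1 + ij.2 ≤ N) _).symm))
  have hz : ∀ f : MvPowerSeries (Fin 2) A, Cong N f (f + 0) := fun f => by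
    rw [add_zero]; exact Cong.refl f
  refine (hz _).trans (Cong.add (Cong.refl _) (Cong.symm ?_))
  refine Cong.trans (g := ∑ ij ∈ (Finset.range (N + 1) ×ˢ Finset.range (N + 1)) with ¬ ij.1 + ij.2 ≤ N, 0)
    (Cong.sum _ ?_) (by rw [Finset.sum_const_zero]; exact Cong.refl _)
  rintro ⟨i, j⟩ hij
  simp only [Finset.mem_filter, not_le] at hij
  rw [dp_pp, pp, mul_smul_comm, monomial_mul_monomial]
  refine (Cong.smul _ (cong_monomial ?_ _)).trans (by rw [smul_zero]; exact Cong.refl _)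
  rw [map_add, map_nsmul, cont_degree, cont_degree, ap_length, smul_eq_mul]
  have := List.length_pos_iff.2 hb
  have := List.length_pos_iff.2 hl
  nlinarith

theorem eul_ee [CharZero k] (E : List (Fin 2) → A) (C : List (Fin 2) → k) (N : ℕ)
    (b : List (Fin 2)) (hb : b ≠ []) :
    Cong N (dd C b • pp E b * ee E C N b) (eul (ee E C N b)) := by
  have h1 : ∀ m, eul (dp (cc C b) (pp E b) m) = (m * b.length) • dp (cc C b) (pp E b) m := by
    intro m
    rw [dp_pp, eul_monomial, map_nsmul, cont_degree, smul_eq_mul]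
  rw [ee, eul_sum, Finset.sum_congr rfl (fun m _ => h1 m),
    Finset.sum_range_succ' (fun m => (m * b.length) • dp (cc C b) (pp E b) m)]
  simp only [zero_mul, zero_smul, add_zero]
  rw [Finset.sum_range_succ, mul_add, Finset.mul_sum]
  have h2 : ∀ m, dd C b • pp E b * dp (cc C b) (pp E b) m =
      ((m + 1) * b.length) • dp (cc C b) (pp E b) (m + 1) := by
    intro m
    rw [dp, dp, smul_mul_smul_comm, ← pow_succ', ← Nat.cast_smul_eq_nsmul k, smul_smul]
    congr 1
    rw [Nat.factorial_succ, dd]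
    have h2 : (m.factorial : k) ≠ 0 := by exact_mod_cast m.factorial_ne_zero
    have h3 : (m + 1 : k) ≠ 0 := by exact_mod_cast m.succ_ne_zero
    push_cast
    field_simp
    ring
  rw [Finset.sum_congr rfl (fun m _ => h2 m), h2 N]
  have hz : ∀ f : MvPowerSeries (Fin 2) A, Cong N (f + 0) f := fun f => by
    rw [add_zero]; exact Cong.refl f
  refine Cong.trans (Cong.add (Cong.refl _) ?_) (hz _)
  rw [← Nat.cast_smul_eq_nsmul k]
  refine (Cong.smul _ (dp_cong ?_)).trans (by rw [smul_zero]; exact Cong.refl _)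
  have := List.length_pos_iff.2 hb
  nlinarith

end alg

end LynAux
namespace LynAux

open MvPowerSeries

section main
variable {k : Type*} [Field k] [CharZero k] {A : Type*} [Ring A] [Algebra k A]

theorem good_nil {L : List (List (Fin 2) × ℕ)} (hL : Good L) (h : flat L = []) : L = [] := by
  cases L with
  | nil => rfl
  | cons p L =>
    exfalso
    have hp := hL.1 p (by simp)
    obtain ⟨s, hs⟩ : ∃ s, p.2 = s + 1 := ⟨p.2 - 1, by omega⟩
    simp [flat, hs, List.replicate_succ] at h
    exact hp.1.1 h.1

def HC (C : List (Fin 2) → k) : Prop :=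
  ∀ (x : Fin 2) (w : List (Fin 2)) (L : List (List (Fin 2) × ℕ)),
      IsLyndon (x :: w) → w ≠ [] → Good L → flat L = w →
      C (x :: w) =
        (w.length.factorial : k) /
            (L.map fun p => (p.1.length.factorial : k) ^ p.2 * (p.2.factorial : k)).prod *
          (L.map fun p => C p.1 ^ p.2).prod

theorem dd_formula {C : List (Fin 2) → k} (hC1 : ∀ x, C [x] = 1) (hC2 : HC C) {x : Fin 2}
    {w : List (Fin 2)} {L : List (List (Fin 2) × ℕ)} (h : IsLyndon (x :: w)) (hL : Good L)
    (hw : flat L = w) :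
    dd C (x :: w) = (L.map fun p => cc C p.1 ^ p.2 / (p.2.factorial : k)).prod := by
  by_cases h0 : w = []
  · subst h0
    rw [good_nil hL hw]
    simp [dd, cc, hC1]
  · have e : (L.map fun p => cc C p.1 ^ p.2 / (p.2.factorial : k)).prod =
        (L.map fun p => C p.1 ^ p.2).prod /
        (L.map fun p => (p.1.length.factorial : k) ^ p.2 * (p.2.factorial : k)).prod := by
      clear hL hw
      induction L with
      | nil => simp
      | cons p L ih =>
        simp only [List.map_cons, List.prod_cons, ih]
        rw [cc, div_pow, div_div, div_mul_div_comm]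
    rw [e, dd, cc, hC2 x w L h h0 hL hw, List.length_cons, Nat.factorial_succ]
    have h2 : (w.length.factorial : k) ≠ 0 := by exact_mod_cast w.length.factorial_ne_zero
    have h3 : (w.length + 1 : k) ≠ 0 := by exact_mod_cast w.length.succ_ne_zero
    push_cast
    field_simp

theorem dd_ap {C : List (Fin 2) → k} (hC1 : ∀ x, C [x] = 1) (hC2 : HC C) {l b : List (Fin 2)}
    (hl : IsLyndon l) (hb : IsLyndon b) (hlb : l < b) (hs : SufGE l b)
    (hn : ∀ u, u ≠ [] → l ≠ u ++ b) (r : ℕ) :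
    dd C (ap l b r) = dd C l * (cc C b ^ r / (r.factorial : k)) := by
  cases l with
  | nil => exact absurd rfl hl.1
  | cons x w =>
    cases r with
    | zero => simp [ap]
    | succ r =>
      obtain ⟨L, hL, hw, hgt⟩ := cfl_gt hs hn
      have h1 := (ap_prop hl hb hlb hs (r + 1)).1
      have e : ap (x :: w) b (r + 1) = x :: flat (L ++ [(b, r + 1)]) := by
        rw [ap_eq, flat_append, flat_single, hw]; simp
      rw [e] at h1 ⊢
      have hL' : Good (L ++ [(b, r + 1)]) := by
        refine ⟨?_, ?_⟩
        · intro p hp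
          simp at hp
          rcases hp with hp | rfl
          · exact hL.1 p hp
          · exact ⟨hb, by simp⟩
        · rw [List.pairwise_append]
          refine ⟨hL.2, by simp, ?_⟩
          intro a ha c hc
          simp at hc; subst hc
          exact hgt a ha
      rw [dd_formula hC1 hC2 h1 hL' rfl, dd_formula hC1 hC2 hl hL hw]
      simp

def HE (E : List (Fin 2) → A) : Prop :=
  ∀ αL αR : List (Fin 2), IsLyndon (αL ++ αR) → αL ≠ [] → IsLyndon αR →
      (∀ δ β' : List (Fin 2), αL ++ αR = β' ++ δ → β' ≠ [] → IsLyndon δ →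
        δ.length ≤ αR.length) →
      E (αL ++ αR) = E αL * E αR - E αR * E αL

/-- admissible tail of the list of Lyndon words -/
structure Adm (N : ℕ) (B : List (List (Fin 2))) : Prop where
  pw : B.Pairwise (fun a b => b < a)
  lyn : ∀ b ∈ B, IsLyndon b
  len : ∀ b ∈ B, b.length ≤ N
  gt : ∀ l, IsLyndon l → l.length ≤ N → l ∉ B → ∀ b ∈ B, b < l

theorem Adm.tail {N : ℕ} {b : List (Fin 2)} {B : List (List (Fin 2))} (h : Adm N (b :: B)) :
    Adm N B := by
  have hp := List.pairwise_cons.1 h.pw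
  refine ⟨hp.2, fun c hc => h.lyn c (by simp [hc]), fun c hc => h.len c (by simp [hc]), ?_⟩
  intro l hl hN hlB c hc
  by_cases hlb : l = b
  · subst hlb; exact hp.1 c hc
  · exact h.gt l hl hN (by simp [hlb, hlB]) c (by simp [hc])

def PB (B : List (List (Fin 2))) (l : List (Fin 2)) : Prop :=
  ∀ u v, u ≠ [] → IsLyndon v → l = u ++ v → v ∉ B

open Classical in
noncomputable def QQ (E : List (Fin 2) → A) (C : List (Fin 2) → k) (B : List (List (Fin 2))) :
    MvPowerSeries (Fin 2) A := ∑ l ∈ B.toFinset with PB B l, dd C l • pp E l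

theorem mem_tail_iff {N : ℕ} {b : List (Fin 2)} {B : List (List (Fin 2))} (h : Adm N (b :: B))
    (l : List (Fin 2)) : (l ∈ B ∧ PB B l) ↔ (IsLyndon l ∧ l.length ≤ N ∧ l < b ∧ SufGE l b) := by
  have hp := List.pairwise_cons.1 h.pw
  constructor
  · rintro ⟨hl, hP⟩
    refine ⟨h.lyn l (by simp [hl]), h.len l (by simp [hl]), hp.1 l hl, ?_⟩
    apply sufGE_of_lyn
    intro u v hu hv e
    by_cases hvb : v = b
    · exact hvb.ge
    · refine (h.gt v hv ?_ (by simp [hvb, hP u v hu hv e]) b (by simp)).le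
      have := h.len l (by simp [hl])
      rw [e] at this
      simp at this; omega
  · rintro ⟨hl, hN, hlb, hs⟩
    refine ⟨?_, ?_⟩
    · by_contra hlB
      exact lt_asymm hlb (h.gt l hl hN (by simp [hlb.ne, hlB]) b (by simp))
    · intro u v hu hv e hvB
      exact absurd (hs u v hu hv.1 e) (not_le.2 (hp.1 v hvB))

theorem step (E : List (Fin 2) → A) (C : List (Fin 2) → k) (hE : HE E)
    (hC1 : ∀ x, C [x] = 1) (hC2 : HC C) {N : ℕ} {b : List (Fin 2)} {B : List (List (Fin 2))}
    (h : Adm N (b :: B)) :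
    Cong N (QQ E C (b :: B) * ee E C N b) (eul (ee E C N b) + ee E C N b * QQ E C B) := by
  classical
  have hp := List.pairwise_cons.1 h.pw
  have hb := h.lyn b (by simp)
  have hbB : b ∉ B := fun hb => lt_irrefl _ (hp.1 b hb)
  set V := B.toFinset.filter (PB B) with hV
  have memV : ∀ l, l ∈ V ↔ (IsLyndon l ∧ l.length ≤ N ∧ l < b ∧ SufGE l b) := by
    intro l; rw [← mem_tail_iff h, hV]; simp
  set M := V.filter (fun l => ∀ u, u ≠ [] → l ≠ u ++ b) with hM
  have hset : (b :: B).toFinset.filter (PB (b :: B)) = insert b M := by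
    ext l
    simp only [Finset.mem_filter, List.mem_toFinset, List.mem_cons, Finset.mem_insert, hM, hV]
    constructor
    · rintro ⟨rfl | hl, hP⟩
      · left; rfl
      · right
        refine ⟨⟨hl, fun u v hu hv e hvB => hP u v hu hv e (by simp [hvB])⟩, ?_⟩
        intro u hu e
        exact hP u b hu hb e (by simp)
    · rintro (rfl | ⟨⟨hl, hP⟩, hn⟩)
      · refine ⟨Or.inl rfl, ?_⟩
        intro u v hu hv e hvB
        have h1 : l < v := by subst e; exact lyn_lt hb hu hv.1
        rcases List.mem_cons.1 hvB with rfl | hvB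
        · exact lt_irrefl _ h1
        · exact lt_asymm h1 (hp.1 v hvB)
      · refine ⟨Or.inr hl, ?_⟩
        intro u v hu hv e hvB
        rcases List.mem_cons.1 hvB with rfl | hvB
        · exact hn u hu e
        · exact hP u v hu hv e hvB
  have hbM : b ∉ M := by simp [hM, hV, hbB]
  have hQ : QQ E C (b :: B) = dd C b • pp E b + ∑ l ∈ M, dd C l • pp E l := by
    rw [QQ, hset, Finset.sum_insert hbM]
  rw [hQ, add_mul]
  refine Cong.add (eul_ee E C N b hb.1) ?_
  have hMprop : ∀ l ∈ M, IsLyndon l ∧ l.length ≤ N ∧ l < b ∧ SufGE l b ∧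
      ∀ u, u ≠ [] → l ≠ u ++ b := by
    intro l hl
    rw [hM, Finset.mem_filter, memV] at hl
    tauto
  have h1 : Cong N ((∑ l ∈ M, dd C l • pp E l) * ee E C N b)
      (∑ l ∈ M, ee E C N b * ∑ r ∈ Finset.range (N + 1), dd C (ap l b r) • pp E (ap l b r)) := by
    rw [Finset.sum_mul]
    refine Cong.sum _ fun l hl => ?_
    obtain ⟨hl1, hl2, hl3, hl4, hl5⟩ := hMprop l hl
    have h2 := step_comm E C N l b hl1.1 hb.1 (fun r => by
      obtain ⟨h3, h4, h5⟩ := ap_prop hl1 hb hl3 hl4 r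
      exact hE _ _ (lyn_prod h3 hb h4) h3.1 hb (std_app h5 hb.1))
    have h3 := Cong.smul (dd C l) h2
    rw [← smul_mul_assoc, ← mul_smul_comm, Finset.smul_sum] at h3
    have h4 : ∀ r, dd C (ap l b r) • pp E (ap l b r) =
        dd C l • (cc C b ^ r / (r.factorial : k)) • pp E (ap l b r) := fun r => by
      rw [smul_smul, dd_ap hC1 hC2 hl1 hb hl3 hl4 hl5]
    rw [Finset.sum_congr rfl (fun r _ => h4 r)]
    exact h3
  refine h1.trans ?_
  rw [← Finset.mul_sum]
  refine Cong.mul (Cong.refl _) ?_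
  rw [← Finset.sum_product' M (Finset.range (N + 1)) (fun l r => dd C (ap l b r) • pp E (ap l b r))]
  have hsplit : QQ E C B = ∑ x ∈ M ×ˢ Finset.range (N + 1) with (ap x.1 b x.2).length ≤ N,
      dd C (ap x.1 b x.2) • pp E (ap x.1 b x.2) := by
    rw [QQ]
    symm
    refine Finset.sum_bij (fun x _ => ap x.1 b x.2) ?_ ?_ ?_ ?_
    · rintro ⟨l, r⟩ hx
      simp only [Finset.mem_filter, Finset.mem_product] at hx
      obtain ⟨hl1, hl2, hl3, hl4, hl5⟩ := hMprop l hx.1.1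
      obtain ⟨h3, h4, h5⟩ := ap_prop hl1 hb hl3 hl4 r
      exact (memV _).2 ⟨h3, hx.2, h4, h5⟩
    · rintro ⟨l, r⟩ hx ⟨l', r'⟩ hx' e
      simp only [Finset.mem_filter, Finset.mem_product] at hx hx'
      obtain ⟨hl1, hl2, hl3, hl4, hl5⟩ := hMprop l hx.1.1
      obtain ⟨hl1', hl2', hl3', hl4', hl5'⟩ := hMprop l' hx'.1.1
      obtain ⟨rfl, rfl⟩ := ap_inj hl1.1 hl1'.1 hl5 hl5' r r' e
      rfl
    · intro l hl
      obtain ⟨h3, h3', h4, h5⟩ := (memV l).1 hl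
      obtain ⟨l₀, r, rfl, a1, a2, a3, a4⟩ := ap_exists hb _ l le_rfl h3 h4 h5
      have hlen := ap_length l₀ b r
      have := List.length_pos_iff.2 hb.1
      have h6 : r ≤ N := by nlinarith
      refine ⟨(l₀, r), ?_, rfl⟩
      simp only [Finset.mem_filter, Finset.mem_product, Finset.mem_range, hM]
      refine ⟨⟨⟨(memV _).2 ⟨a1, by omega, a2, a3⟩, a4⟩, by omega⟩, h3'⟩
    · intro x hx; rfl
  rw [hsplit, ← Finset.sum_filter_add_sum_filter_not (M ×ˢ Finset.range (N + 1))
    (fun x => (ap x.1 b x.2).length ≤ N)]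
  have hz : ∀ f : MvPowerSeries (Fin 2) A, Cong N (f + 0) f := fun f => by
    rw [add_zero]; exact Cong.refl f
  refine (Cong.add (Cong.refl _) ?_).trans (hz _)
  refine Cong.trans (Cong.sum _ (g := fun _ => 0) ?_)
    (by rw [Finset.sum_const_zero]; exact Cong.refl _)
  rintro x hx
  simp only [Finset.mem_filter, not_le] at hx
  refine (Cong.smul _ (cong_monomial ?_ _)).trans (by rw [smul_zero]; exact Cong.refl _)
  rw [cont_degree]; exact hx.2

theorem main_cong (E : List (Fin 2) → A) (C : List (Fin 2) → k) (hE : HE E)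
    (hC1 : ∀ x, C [x] = 1) (hC2 : HC C) {N : ℕ} (B : List (List (Fin 2))) (h : Adm N B) :
    Cong N (QQ E C B * (B.map (ee E C N)).prod) (eul (B.map (ee E C N)).prod) := by
  induction B with
  | nil =>
    simp only [QQ, List.map_nil, List.prod_nil]
    intro n hn
    rw [coeff_eul, coeff_one]
    split_ifs with h0
    · simp [h0]
    · simp
  | cons b B ih =>
    rw [List.map_cons, List.prod_cons, eul_mul, ← mul_assoc]
    refine (Cong.mul (step E C hE hC1 hC2 h) (Cong.refl _)).trans ?_
    rw [add_mul, mul_assoc]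
    exact Cong.add (Cong.refl _) (Cong.mul (Cong.refl _) (ih h.tail))

open Classical in
noncomputable def allL (N : ℕ) : List (List (Fin 2)) :=
  (((List.finite_length_le (Fin 2) N).toFinset.filter IsLyndon).sort (· ≤ ·)).reverse

theorem mem_allL {N : ℕ} {l : List (Fin 2)} : l ∈ allL N ↔ IsLyndon l ∧ l.length ≤ N := by
  simp [allL, and_comm]

theorem adm_allL (N : ℕ) : Adm N (allL N) := by
  refine ⟨?_, fun b hb => (mem_allL.1 hb).1, fun b hb => (mem_allL.1 hb).2, ?_⟩
  · rw [allL, List.pairwise_reverse]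
    exact (Finset.sortedLT_sort _).pairwise
  · intro l hl hN hlB
    exact absurd (mem_allL.2 ⟨hl, hN⟩) hlB

theorem QQ_allL (E : List (Fin 2) → A) (C : List (Fin 2) → k) (hC1 : ∀ x, C [x] = 1) {N : ℕ}
    (hN : 1 ≤ N) : QQ E C (allL N) = pp E [1] + pp E [0] := by
  classical
  have : (allL N).toFinset.filter (PB (allL N)) = {[1], [0]} := by
    ext l
    simp only [Finset.mem_filter, List.mem_toFinset, mem_allL, Finset.mem_insert,
      Finset.mem_singleton]
    constructor
    · rintro ⟨⟨hl, hlN⟩, hP⟩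
      rcases List.eq_nil_or_concat l with rfl | ⟨l', x, rfl⟩
      · exact absurd rfl hl.1
      · rw [List.concat_eq_append] at *
        by_cases h0 : l' = []
        · subst h0; fin_cases x <;> simp
        · exact absurd (mem_allL.2 ⟨lyn_single x, by simpa using hN⟩)
            (hP l' [x] h0 (lyn_single x) rfl)
    · have : ∀ x : Fin 2, (IsLyndon [x] ∧ [x].length ≤ N) ∧ PB (allL N) [x] := by
        intro x
        refine ⟨⟨lyn_single x, by simpa using hN⟩, ?_⟩
        intro u v hu hv e
        have := congrArg List.length e
        have h1 := List.length_pos_iff.2 hu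
        have h2 := List.length_pos_iff.2 hv.1
        simp at this; omega
      rintro (rfl | rfl) <;> exact this _
  have hd : ∀ x : Fin 2, dd C [x] = 1 := by intro x; simp [dd, cc, hC1]
  have e : QQ E C (allL N) = ∑ l ∈ (allL N).toFinset.filter (PB (allL N)), dd C l • pp E l := by
    rw [QQ]
  rw [e, this, Finset.sum_pair (by simp), hd, hd, one_smul, one_smul]

/-- exponents -/
noncomputable def mk (i j : ℕ) : Fin 2 →₀ ℕ := Finsupp.single 1 i + Finsupp.single 0 j

theorem mk_degree (i j : ℕ) : (mk i j).degree = i + j := by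
  rw [mk, map_add, Finsupp.degree_single, Finsupp.degree_single]

theorem coeff_pp1 (E : List (Fin 2) → A) (F : MvPowerSeries (Fin 2) A) (i j : ℕ) :
    coeff (mk i j) (pp E [1] * F) = if 1 ≤ i then E [1] * coeff (mk (i - 1) j) F else 0 := by
  rw [pp, coeff_monomial_mul]
  have h1 : cont [1] ≤ mk i j ↔ 1 ≤ i := by
    rw [Finsupp.le_def]
    simp [cont_apply, mk, Fin.forall_fin_two, Finsupp.single_apply]
  have h2 : mk i j - cont [1] = mk (i - 1) j := by
    ext x
    rw [Finsupp.tsub_apply, cont_apply]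
    fin_cases x <;> simp [mk, Finsupp.single_apply]
  rw [h2]; simp only [h1]

theorem coeff_pp0 (E : List (Fin 2) → A) (F : MvPowerSeries (Fin 2) A) (i j : ℕ) :
    coeff (mk i j) (pp E [0] * F) = if 1 ≤ j then E [0] * coeff (mk i (j - 1)) F else 0 := by
  rw [pp, coeff_monomial_mul]
  have h1 : cont [0] ≤ mk i j ↔ 1 ≤ j := by
    rw [Finsupp.le_def]
    simp [cont_apply, mk, Fin.forall_fin_two, Finsupp.single_apply]
  have h2 : mk i j - cont [0] = mk i (j - 1) := by
    ext x
    rw [Finsupp.tsub_apply, cont_apply]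
    fin_cases x <;> simp [mk, Finsupp.single_apply]
  rw [h2]; simp only [h1]

theorem coeff_zero_prod (E : List (Fin 2) → A) (C : List (Fin 2) → k) (N : ℕ)
    (B : List (List (Fin 2))) (hB : ∀ b ∈ B, b ≠ []) :
    coeff 0 (B.map (ee E C N)).prod = 1 := by
  have h1 : ∀ b ∈ B, constantCoeff (ee E C N b) = 1 := by
    intro b hb
    rw [ee, map_sum, Finset.sum_eq_single 0]
    · simp [dp]
    · intro m _ hm
      rw [dp_pp, ← coeff_zero_eq_constantCoeff_apply, coeff_monomial, if_neg]
      intro e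
      have := congrArg Finsupp.degree e
      rw [map_nsmul, cont_degree, map_zero] at this
      have h2 := List.length_pos_iff.2 (hB b hb)
      have h3 := Nat.pos_of_ne_zero hm
      have h4 := Nat.mul_pos h3 h2
      rw [smul_eq_mul] at this
      omega
    · simp
  rw [coeff_zero_eq_constantCoeff_apply, map_list_prod, List.map_map]
  apply List.prod_eq_one
  intro x hx
  obtain ⟨b, hb, rfl⟩ := List.mem_map.1 hx
  exact h1 b hb

theorem SH_coeff (E : List (Fin 2) → A) (C : List (Fin 2) → k) (hE : HE E)
    (hC1 : ∀ x, C [x] = 1) (hC2 : HC C) (N : ℕ) (n : ℕ) : ∀ i j, i + j = n → n ≤ N →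
    SH (E [1]) (E [0]) i j =
      ((i + j).factorial : k) • coeff (mk i j) ((allL N).map (ee E C N)).prod := by
  have hm := main_cong E C hE hC1 hC2 (allL N) (adm_allL N)
  set F := ((allL N).map (ee E C N)).prod with hF
  induction n with
  | zero =>
    intro i j hij _
    obtain ⟨rfl, rfl⟩ : i = 0 ∧ j = 0 := by omega
    have : mk 0 0 = 0 := by simp [mk]
    rw [this, hF, coeff_zero_prod E C N _ (fun b hb => (mem_allL.1 hb).1.1)]
    simp [SH]
  | succ n ih =>
    intro i j hij hN
    have h1 := hm (mk i j) (by rw [mk_degree]; omega)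
    rw [QQ_allL E C hC1 (by omega), add_mul, map_add, coeff_pp1, coeff_pp0, coeff_eul, mk_degree,
      hij, ← Nat.cast_smul_eq_nsmul k] at h1
    rw [hij, Nat.factorial_succ, mul_comm, Nat.cast_mul, mul_smul, ← h1]
    rcases i with _ | i <;> rcases j with _ | j
    · omega
    · have a := ih 0 j (by omega) (by omega)
      simp only [SH]
      rw [a, show 0 + j = n by omega]
      simp
    · have a := ih i 0 (by omega) (by omega)
      simp only [SH]
      rw [a, show i + 0 = n by omega]
      simp
    · have a := ih i (j + 1) (by omega) (by omega)
      have b := ih (i + 1) j (by omega) (by omega)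
      simp only [SH]
      rw [a, b, show i + (j + 1) = n by omega, show i + 1 + j = n by omega]
      simp

/-- index sets of the expansion -/
def TT (N : ℕ) : List (List (Fin 2)) → Finset (List (List (Fin 2) × ℕ))
  | [] => {[]}
  | b :: B => (Finset.range (N + 1) ×ˢ TT N B).image
      (fun x => if x.1 = 0 then x.2 else (b, x.1) :: x.2)

theorem mem_TT (N : ℕ) (B : List (List (Fin 2))) : ∀ L, L ∈ TT N B ↔
    (∀ p ∈ L, 1 ≤ p.2 ∧ p.2 ≤ N) ∧ (L.map Prod.fst).Sublist B := by
  induction B with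
  | nil =>
    intro L; simp only [TT, Finset.mem_singleton, List.sublist_nil, List.map_eq_nil_iff]
    constructor
    · rintro rfl; simp
    · exact fun h => h.2
  | cons b B ih =>
    intro L
    simp only [TT, Finset.mem_image, Finset.mem_product, Finset.mem_range, Prod.exists, ih]
    constructor
    · rintro ⟨m, L', ⟨hm, h1, h2⟩, rfl⟩
      split_ifs with h0
      · exact ⟨h1, h2.cons _⟩
      · refine ⟨?_, by simpa using h2⟩
        intro p hp
        rcases List.mem_cons.1 hp with rfl | hp
        · exact ⟨by simp; omega, by simp; omega⟩
        · exact h1 p hp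
    · rintro ⟨h1, h2⟩
      rcases List.sublist_cons_iff.1 h2 with h3 | ⟨r, hr, h3⟩
      · exact ⟨0, L, ⟨by omega, h1, h3⟩, by simp⟩
      · cases L with
        | nil => simp at hr
        | cons p L =>
          simp at hr
          have hp := h1 p (by simp)
          refine ⟨p.2, L, ⟨by omega, fun q hq => h1 q (by simp [hq]), by rw [hr.2]; exact h3⟩, ?_⟩
          rw [if_neg (by omega), ← hr.1]

theorem prod_expand (E : List (Fin 2) → A) (C : List (Fin 2) → k) (N : ℕ)
    (B : List (List (Fin 2))) (hB : B.Nodup) : (B.map (ee E C N)).prod =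
      ∑ L ∈ TT N B, (L.map fun p => dp (cc C p.1) (pp E p.1) p.2).prod := by
  induction B with
  | nil => simp [TT]
  | cons b B ih =>
    rw [List.nodup_cons] at hB
    rw [List.map_cons, List.prod_cons, ih hB.2, TT, Finset.sum_image, Finset.sum_product, ee,
      Finset.sum_mul_sum]
    · refine Finset.sum_congr rfl fun m _ => Finset.sum_congr rfl fun L _ => ?_
      dsimp only
      split_ifs with h
      · subst h; simp [dp]
      · simp
    · have key : ∀ m L' L, (b, m) :: L' = L → L ∈ TT N B → False := by
        rintro m L' L rfl hL
        have := ((mem_TT N B _).1 hL).2.subset (a := b) (by simp)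
        exact hB.1 this
      rintro ⟨m, L⟩ h ⟨m', L'⟩ h' e
      simp only [Finset.coe_product, Set.mem_prod, Finset.mem_coe] at h h'
      dsimp only at e
      split_ifs at e with h0 h1 h1
      · simp [h0, h1, e]
      · exact (key _ _ _ e.symm h.2).elim
      · exact (key _ _ _ e h'.2).elim
      · simp at e; simp [e]

theorem term_mono (E : List (Fin 2) → A) (C : List (Fin 2) → k) (L : List (List (Fin 2) × ℕ)) :
    (L.map fun p => dp (cc C p.1) (pp E p.1) p.2).prod =
      monomial (L.map fun p => p.2 • cont p.1).sum ((1 / (L.map fun p => (p.2.factorial : k)).prod) •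
        (L.map fun p => (cc C p.1 • E p.1) ^ p.2).prod) := by
  induction L with
  | nil => simp
  | cons p L ih =>
    rw [List.map_cons, List.prod_cons, ih, dp_pp, monomial_mul_monomial]
    simp only [List.map_cons, List.sum_cons, List.prod_cons]
    rw [smul_mul_smul_comm, smul_pow, smul_mul_assoc, smul_smul]
    congr 2
    ring

theorem cont_sum (L : List (List (Fin 2) × ℕ)) (i j : ℕ) :
    mk i j = (L.map fun p => p.2 • cont p.1).sum ↔
      (L.map fun p => p.2 * p.1.count 1).sum = i ∧ (L.map fun p => p.2 * p.1.count 0).sum = j := by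
  have h : ∀ x, (L.map fun p => p.2 • cont p.1).sum x = (L.map fun p => p.2 * p.1.count x).sum := by
    intro x
    induction L with
    | nil => simp
    | cons p L ih => simp [ih, cont_apply]
  rw [Finsupp.ext_iff, Fin.forall_fin_two, h, h]
  simp [mk, Finsupp.single_apply]
  tauto

theorem sub_of_good {N : ℕ} {L : List (List (Fin 2) × ℕ)} {B : List (List (Fin 2))} (hL : Good L)
    (hB : B.Pairwise (fun a b => b < a)) (h : ∀ p ∈ L, p.1 ∈ B) : (L.map Prod.fst).Sublist B := by
  have h1 : (L.map Prod.fst).Pairwise (fun a b => b < a) := by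
    rw [List.pairwise_map]; exact hL.2
  have h2 : L.map Prod.fst ⊆ B := by
    intro a ha
    obtain ⟨p, hp, rfl⟩ := List.mem_map.1 ha
    exact h p hp
  generalize L.map Prod.fst = M at h1 h2
  clear hL h
  induction B generalizing M with
  | nil => simp [List.subset_nil.1 h2]
  | cons b B ih =>
    rw [List.pairwise_cons] at hB
    cases M with
    | nil => simp
    | cons a M =>
      have h1' := h1
      rw [List.pairwise_cons] at h1
      have hin : ∀ c ∈ M, c ∈ B := by
        intro c hc
        rcases List.mem_cons.1 (h2 (List.mem_cons_of_mem _ hc)) with rfl | h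
        · exfalso
          have h3 := h1.1 c hc
          rcases List.mem_cons.1 (h2 (a := a) (by simp)) with rfl | h4
          · exact lt_irrefl _ h3
          · exact lt_asymm h3 (hB.1 _ h4)
        · exact h
      rcases List.mem_cons.1 (h2 (a := a) (by simp)) with rfl | h4
      · exact (ih hB.2 M h1.2 hin).cons_cons _
      · refine (ih hB.2 (a :: M) h1' ?_).cons _
        intro c hc
        rcases List.mem_cons.1 hc with rfl | hc
        · exact h4
        · exact hin c hc

theorem good_iff (L : List (List (Fin 2) × ℕ)) : Good L ↔
    (∀ p ∈ L, IsLyndon p.1 ∧ 1 ≤ p.2) ∧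
      L.IsChain (fun p q => List.Lex (· < ·) q.1 p.1) := by
  haveI : Trans (fun p q : List (Fin 2) × ℕ => List.Lex (· < ·) q.1 p.1)
      (fun p q : List (Fin 2) × ℕ => List.Lex (· < ·) q.1 p.1)
      (fun p q : List (Fin 2) × ℕ => List.Lex (· < ·) q.1 p.1) :=
    ⟨fun {a b c} h1 h2 => lt_trans (a := c.1) (b := b.1) (c := a.1) h2 h1⟩
  rw [List.isChain_iff_pairwise]
  rfl

theorem count_add (w : List (Fin 2)) : w.count 1 + w.count 0 = w.length := by
  induction w with
  | nil => rfl
  | cons x w ih =>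
    rw [List.count_cons, List.count_cons, List.length_cons, ← ih]
    fin_cases x <;> simp <;> omega

theorem set_eq (i j : ℕ) : {L : List (List (Fin 2) × ℕ) |
          (∀ p ∈ L, IsLyndon p.1 ∧ 1 ≤ p.2) ∧
          L.IsChain (fun p q => List.Lex (· < ·) q.1 p.1) ∧
          (L.map fun p => p.2 * p.1.count 1).sum = i ∧
          (L.map fun p => p.2 * p.1.count 0).sum = j} =
    (((TT (i + j) (allL (i + j))).filter
      (fun L => mk i j = (L.map fun p => p.2 • cont p.1).sum) : Finset _) : Set _) := by
  ext L
  rw [Set.mem_setOf_eq, Finset.mem_coe, Finset.mem_filter, cont_sum, mem_TT, ← and_assoc,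
    ← good_iff]
  have hadm := adm_allL (i + j)
  constructor
  · rintro ⟨hL, h1, h2⟩
    have hp : ∀ p ∈ L, p.2 * p.1.length ≤ i + j := by
      intro p hp
      have a := List.single_le_sum (l := L.map fun p => p.2 * p.1.count 1) (by simp) _
        (List.mem_map_of_mem hp)
      have b := List.single_le_sum (l := L.map fun p => p.2 * p.1.count 0) (by simp) _
        (List.mem_map_of_mem hp)
      rw [← count_add, mul_add]
      omega
    refine ⟨⟨fun p h => ⟨(hL.1 p h).2, ?_⟩, sub_of_good (N := i + j) hL hadm.pw fun p h =>
      mem_allL.2 ⟨(hL.1 p h).1, ?_⟩⟩, h1, h2⟩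
    · exact (Nat.le_mul_of_pos_right _ (List.length_pos_iff.2 (hL.1 p h).1.1)).trans (hp p h)
    · exact (Nat.le_mul_of_pos_left _ (hL.1 p h).2).trans (hp p h)
  · rintro ⟨⟨h1, h2⟩, h3⟩
    refine ⟨⟨fun p hp => ⟨hadm.lyn _ (h2.subset (List.mem_map_of_mem hp)), (h1 p hp).1⟩, ?_⟩, h3⟩
    have := hadm.pw.sublist h2
    rwa [List.pairwise_map] at this

end main
end LynAux

/-- Theorem A / Corollary `cor:noncomm-binom-thm-LSbasis` of the paper:
expansion of the shuffle type polynomials `SH_{i,j}(E(2),E(1))` in the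
Lyndon–Shirshov PBW basis. Here the alphabet is `Fin 2` (letter `1` is `0`,
letter `2` is `1`), `E` is the Lyndon–Shirshov basis and `C` the coefficient
function, both characterized by the stated hypotheses.  The sum runs over all
finite nonincreasing families of Lyndon words with positive multiplicities,
encoded as lists of pairs `(α, t)` with strictly decreasing `α`'s. -/
theorem stmt_5 (k : Type*) [Field k] [CharZero k]
    (E : List (Fin 2) → FreeAlgebra k (Fin 2))
    (hE1 : ∀ x : Fin 2, E [x] = FreeAlgebra.ι k x)
    (hE2 : ∀ αL αR : List (Fin 2), IsLyndon (αL ++ αR) → αL ≠ [] → IsLyndon αR →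
      (∀ δ β' : List (Fin 2), αL ++ αR = β' ++ δ → β' ≠ [] → IsLyndon δ →
        δ.length ≤ αR.length) →
      E (αL ++ αR) = E αL * E αR - E αR * E αL)
    (C : List (Fin 2) → k)
    (hC1 : ∀ x : Fin 2, C [x] = 1)
    (hC2 : ∀ (x : Fin 2) (w : List (Fin 2)) (L : List (List (Fin 2) × ℕ)),
      IsLyndon (x :: w) → w ≠ [] →
      (∀ p ∈ L, IsLyndon p.1 ∧ 1 ≤ p.2) →
      L.Chain' (fun p q => List.Lex (· < ·) q.1 p.1) →
      (L.map fun p => (List.replicate p.2 p.1).flatten).flatten = w →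
      C (x :: w) =
        (w.length.factorial : k) /
            (L.map fun p => (p.1.length.factorial : k) ^ p.2 * (p.2.factorial : k)).prod *
          (L.map fun p => C p.1 ^ p.2).prod)
    (i j : ℕ) :
    SH (E [1]) (E [0]) i j =
      ∑ᶠ L ∈ {L : List (List (Fin 2) × ℕ) |
          (∀ p ∈ L, IsLyndon p.1 ∧ 1 ≤ p.2) ∧
          L.Chain' (fun p q => List.Lex (· < ·) q.1 p.1) ∧
          (L.map fun p => p.2 * p.1.count 1).sum = i ∧
          (L.map fun p => p.2 * p.1.count 0).sum = j},
        (((i + j).factorial : k) / (L.map fun p => (p.2.factorial : k)).prod) •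
          (L.map fun p => ((C p.1 / (p.1.length.factorial : k)) • E p.1) ^ p.2).prod := by
  have hC2' : LynAux.HC C := fun x w L h1 h2 h3 h4 =>
    hC2 x w L h1 h2 h3.1 ((LynAux.good_iff L).1 h3).2 h4
  have h := LynAux.SH_coeff E C hE2 hC1 hC2' (i + j) (i + j) i j rfl le_rfl
  have hnd : (LynAux.allL (i + j)).Nodup :=
    (LynAux.adm_allL (i + j)).pw.imp (fun {a b} h => h.ne')
  rw [h, LynAux.prod_expand E C _ _ hnd, map_sum, Finset.smul_sum]
  refine Eq.trans ?_ (finsum_mem_congr (LynAux.set_eq i j) (fun _ _ => rfl)).symm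
  rw [finsum_mem_coe_finset, Finset.sum_filter]
  refine Finset.sum_congr rfl fun L _ => ?_
  rw [LynAux.term_mono, MvPowerSeries.coeff_monomial]
  split_ifs with h0
  · rw [smul_smul, mul_one_div]; rfl
  · simp
end

section
/- Let k be a field of prime characteristic p and X = {1, 2} with 1 ≺ 2. Then in the free algebra k⟨X⟩, for every 1 ≤ m ≤ p−1 the element SH_{m,p−m}(E(2), E(1)) lies in the k-linear span of { E(α) : α a Lyndon word over X with α(2) = m and α(1) = p−m }. Consequently (E(1)+E(2))^p − E(1)^p − E(2)^p lies in the k-linear span of { E(α) : α a Lyndon word over X of length p }. -/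
section LexFacts
variable {X : Type*} [LinearOrder X]

theorem lex_app_of_not_prefix : ∀ {a b : List X}, a < b → ¬ a <+: b → ∀ x y : List X, a ++ x < b ++ y
  | [], b, _, h2, x, y => absurd (List.nil_prefix) h2
  | _ :: _, [], h1, _, _, _ => absurd h1 (List.not_lt_nil _)
  | c :: a, d :: b, h1, h2, x, y => by
    rw [List.cons_append, List.cons_append, List.cons_lt_cons_iff]
    rcases List.cons_lt_cons_iff.1 h1 with h | ⟨rfl, h⟩
    · exact Or.inl h
    · refine Or.inr ⟨rfl, lex_app_of_not_prefix h ?_ x y⟩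
      intro h3
      exact h2 ((List.cons_prefix_cons).2 ⟨rfl, h3⟩)

theorem lex_app_of_length {a b : List X} (h : a < b) (hl : b.length ≤ a.length) (x y : List X) :
    a ++ x < b ++ y := by
  apply lex_app_of_not_prefix h
  intro hp
  have := hp.eq_of_length_le hl
  subst this
  exact lt_irrefl _ h

theorem lex_app_left {a b : List X} (s : List X) (h : a < b) : s ++ a < s ++ b :=
  List.append_left_lt h

theorem lex_of_app_left {a b : List X} (s : List X) (h : s ++ a < s ++ b) : a < b := by
  rcases lt_trichotomy a b with h1 | rfl | h1
  · exact h1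
  · exact absurd h (lt_irrefl _)
  · exact absurd h (lt_asymm (lex_app_left s h1))

theorem lex_lt_app (a : List X) {b : List X} (hb : b ≠ []) : a < a ++ b := by
  have : a ++ [] < a ++ b := lex_app_left a (by
    cases b with
    | nil => exact absurd rfl hb
    | cons c t => exact List.nil_lt_cons c t)
  simpa using this

theorem lyn_iff {w : List X} : IsLyndon w ↔
    w ≠ [] ∧ ∀ u v : List X, u ≠ [] → v ≠ [] → w = u ++ v → w < v := by
  constructor
  · rintro ⟨h0, h⟩
    refine ⟨h0, fun u v hu hv e => ?_⟩
    have h1 : w < v ++ u := h u v hu hv e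
    by_contra hc
    have hul : 0 < u.length := List.length_pos_iff.2 hu
    have hvw : v < w := lt_of_le_of_ne (not_lt.1 hc) (by
      intro h2; have := congrArg List.length e; rw [h2] at this; simp at this; exact hu this)
    by_cases hp : v <+: w
    · obtain ⟨t, ht⟩ := hp
      have hlen := congrArg List.length e
      rw [← ht] at hlen
      simp at hlen
      have ht0 : t ≠ [] := by
        intro h; rw [h, List.length_nil] at hlen; omega
      have h2 : t < u := lex_of_app_left v (by rw [ht]; exact h1)
      have h3 : w < t ++ v := h v t hv ht0 ht.symm
      have h4 : t ++ v < u ++ v := lex_app_of_length h2 (by omega) v v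
      rw [← e] at h4
      exact lt_asymm h3 h4
    · have := lex_app_of_not_prefix hvw hp u []
      rw [List.append_nil] at this
      exact lt_asymm this h1
  · rintro ⟨h0, h⟩
    refine ⟨h0, fun u v hu hv e => ?_⟩
    exact lt_trans (h u v hu hv e) (lex_lt_app v hu)

theorem lyn_append {a b : List X} (ha : IsLyndon a) (hb : IsLyndon b) (hab : a < b) :
    IsLyndon (a ++ b) ∧ a ++ b < b := by
  have ha' := lyn_iff.1 ha
  have hb' := lyn_iff.1 hb
  have key : a ++ b < b := by
    by_cases hp : a <+: b
    · obtain ⟨t, rfl⟩ := hp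
      have ht : t ≠ [] := by
        rintro rfl
        simp at hab
      exact lex_app_left a (hb'.2 a t ha'.1 ht rfl)
    · simpa using lex_app_of_not_prefix hab hp b []
  refine ⟨lyn_iff.2 ⟨by simp [ha'.1], fun u v hu hv e => ?_⟩, key⟩
  rcases List.append_eq_append_iff.1 e with ⟨s, rfl, rfl⟩ | ⟨s, rfl, rfl⟩
  · rcases eq_or_ne s [] with rfl | hs
    · simpa using key
    · exact lt_trans key (hb'.2 s v hs hv rfl)
  · rcases eq_or_ne s [] with rfl | hs
    · simpa using key
    · exact lex_app_of_length (ha'.2 u s hu hs rfl) (by simp) b b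

/-- The minimal proper suffix. -/
theorem exists_std {w : List X} (hw : IsLyndon w) (hl : 2 ≤ w.length) :
    ∃ l r : List X, w = l ++ r ∧ l ≠ [] ∧ r ≠ [] ∧
      ∀ u v : List X, u ≠ [] → v ≠ [] → w = u ++ v → r ≤ v := by
  classical
  have hfin : (w.tails.filter (fun v => v ≠ [] ∧ v ≠ w)).toFinset.Nonempty := by
    obtain ⟨c, d, t, rfl⟩ : ∃ c d t, w = c :: d :: t := by
      match w, hl with
      | c :: d :: t, _ => exact ⟨c, d, t, rfl⟩
    refine ⟨d :: t, ?_⟩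
    simp only [List.mem_toFinset, List.mem_filter, List.mem_tails]
    refine ⟨⟨[c], rfl⟩, ?_⟩
    simp
  obtain ⟨r, hr, hmin⟩ := Finset.exists_min_image _ id hfin
  simp only [List.mem_toFinset, List.mem_filter, List.mem_tails, decide_eq_true_eq, id] at hr hmin
  obtain ⟨⟨l, e⟩, hr0, hrw⟩ := hr
  refine ⟨l, r, e.symm, ?_, hr0, ?_⟩
  · rintro rfl; exact hrw (by simpa using e)
  · intro u v hu hv e'
    refine hmin v ⟨⟨u, e'.symm⟩, hv, ?_⟩
    rintro rfl
    exact hu (by simpa using e')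

/-- Everything about the standard factorization. -/
theorem std_props {l r : List X} (hw : IsLyndon (l ++ r)) (hl : l ≠ []) (hr : r ≠ [])
    (hmin : ∀ u v : List X, u ≠ [] → v ≠ [] → l ++ r = u ++ v → r ≤ v) :
    IsLyndon l ∧ IsLyndon r ∧
      (∀ d u : List X, l ++ r = u ++ d → u ≠ [] → IsLyndon d → d.length ≤ r.length) := by
  have hw' := lyn_iff.1 hw
  refine ⟨lyn_iff.2 ⟨hl, ?_⟩, lyn_iff.2 ⟨hr, ?_⟩, ?_⟩
  · rintro u t hu ht rfl
    by_contra hc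
    have htl : t < u ++ t := lt_of_le_of_ne (not_lt.1 hc) (by
      intro h; have := congrArg List.length h; simp at this; exact hu this)
    have h1 : u ++ t ++ r < t ++ r := hw'.2 u (t ++ r) hu (by simp [ht]) (by simp)
    by_cases hp : t <+: u ++ t
    · obtain ⟨s, hs⟩ := hp
      rw [← hs, List.append_assoc] at h1
      have h2 := lex_of_app_left t h1
      have h3 := hmin t (s ++ r) ht (by simp [hr]) (by rw [← hs, List.append_assoc])
      exact absurd h2 (not_lt.2 h3)
    · exact lt_asymm h1 (lex_app_of_not_prefix htl hp r r)
  · rintro u v hu hv rfl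
    have := hmin (l ++ u) v (by simp [hl]) hv (by simp)
    refine lt_of_le_of_ne this ?_
    intro h; have := congrArg List.length h; simp at this; exact hu this
  · intro d u e hu hd
    by_contra hc
    have h1 := hmin u d hu hd.1 e
    obtain ⟨s, hs⟩ : r <:+ d :=
      List.suffix_of_suffix_length_le (List.suffix_append l r) ⟨u, e.symm⟩ (by omega)
    have hs0 : s ≠ [] := by
      rintro rfl
      simp at hs
      subst hs
      simp at hc
    have := (lyn_iff.1 hd).2 s r hs0 hr hs.symm
    exact absurd this (not_lt.2 h1)

/-- If every proper suffix of `a` is `≥ b`, then `(a, b)` is standard. -/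
theorem std_append {a b : List X} (hb : IsLyndon b)
    (h : ∀ u v : List X, u ≠ [] → v ≠ [] → a = u ++ v → b ≤ v) :
    ∀ d u : List X, a ++ b = u ++ d → u ≠ [] → IsLyndon d → d.length ≤ b.length := by
  intro d u e hu hd
  by_contra hc
  obtain ⟨s, hs⟩ : b <:+ d :=
    List.suffix_of_suffix_length_le (List.suffix_append a b) ⟨u, e.symm⟩ (by omega)
  have hs0 : s ≠ [] := by
    rintro rfl
    simp at hs
    subst hs
    simp at hc
  have h1 := (lyn_iff.1 hd).2 s b hs0 hb.1 hs.symm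
  subst hs
  have e2 : a = u ++ s := by
    rw [← List.append_assoc] at e
    exact List.append_cancel_right e
  have h2 := h u s hu hs0 e2
  have h3 : s < s ++ b := lex_lt_app s hb.1
  exact absurd (lt_trans h3 h1) (not_lt.2 h2)

end LexFacts

section Key
variable {k : Type*} [Field k] {A : Type*} [Ring A] [Algebra k A]

theorem span_bracket_mem {S T : Set A} {V : Submodule k A} {x y : A}
    (hx : x ∈ Submodule.span k S) (hy : y ∈ Submodule.span k T)
    (h : ∀ s ∈ S, ∀ t ∈ T, s * t - t * s ∈ V) : x * y - y * x ∈ V := by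
  induction hx, hy using Submodule.span_induction₂ with
  | mem_mem x y hx hy => exact h x hx y hy
  | zero_left y hy => simp
  | zero_right x hx => simp
  | add_left x y z _ _ _ h1 h2 =>
    have : (x + y) * z - z * (x + y) = (x * z - z * x) + (y * z - z * y) := by noncomm_ring
    rw [this]; exact V.add_mem h1 h2
  | add_right x y z _ _ _ h1 h2 =>
    have : x * (y + z) - (y + z) * x = (x * y - y * x) + (x * z - z * x) := by noncomm_ring
    rw [this]; exact V.add_mem h1 h2
  | smul_left r x y _ _ h1 =>
    have : (r • x) * y - y * (r • x) = r • (x * y - y * x) := by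
      rw [smul_mul_assoc, mul_smul_comm, smul_sub]
    rw [this]; exact V.smul_mem r h1
  | smul_right r x y _ _ h1 =>
    have : x * (r • y) - (r • y) * x = r • (x * y - y * x) := by
      rw [smul_mul_assoc, mul_smul_comm, smul_sub]
    rw [this]; exact V.smul_mem r h1

/-- span of the basis elements of multidegree that of `w`, words below `b`. -/
def lynBelow (k : Type*) [Field k] {A : Type*} [Ring A] [Algebra k A] (E : List (Fin 2) → A)
    (b w : List (Fin 2)) : Submodule k A :=
  Submodule.span k {a : A | ∃ g : List (Fin 2), IsLyndon g ∧ g < b ∧ g.Perm w ∧ a = E g}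

theorem lynBelow_mono {E : List (Fin 2) → A} {b b' w w' : List (Fin 2)} (hb : b ≤ b')
    (hw : w.Perm w') : lynBelow k E b w ≤ lynBelow k E b' w' := by
  apply Submodule.span_mono
  rintro a ⟨g, h1, h2, h3, rfl⟩
  exact ⟨g, h1, lt_of_lt_of_le h2 hb, h3.trans hw, rfl⟩

theorem key_bracket (E : List (Fin 2) → A)
    (hE2 : ∀ αL αR : List (Fin 2), IsLyndon (αL ++ αR) → αL ≠ [] → IsLyndon αR →
      (∀ δ β' : List (Fin 2), αL ++ αR = β' ++ δ → β' ≠ [] → IsLyndon δ →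
        δ.length ≤ αR.length) →
      E (αL ++ αR) = E αL * E αR - E αR * E αL) :
    ∀ n : ℕ, ∀ b a : List (Fin 2), IsLyndon a → IsLyndon b → a < b → a.length + b.length = n →
      E a * E b - E b * E a ∈ lynBelow k E b (a ++ b) := by
  intro n
  induction n using Nat.strong_induction_on with
  | _ n ihn =>
  intro b
  by_cases hbn : b.length ≤ n
  swap
  · intro a _ _ _ h; omega
  have hwf : {l : List (Fin 2) | l.length ≤ n}.WellFoundedOn (· < ·) :=
    (List.finite_length_le (Fin 2) n).wellFoundedOn
  refine hwf.induction (x := b) hbn (P := fun b => ∀ a : List (Fin 2), IsLyndon a → IsLyndon b →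
    a < b → a.length + b.length = n → E a * E b - E b * E a ∈ lynBelow k E b (a ++ b)) ?_
  clear b hbn
  intro b hb ihb a ha hbl hab hn
  -- bracket of two words below b
  have aux : ∀ c d : List (Fin 2), IsLyndon c → IsLyndon d → c < b → d < b →
      c.length + d.length = n → E c * E d - E d * E c ∈ lynBelow k E b (c ++ d) := by
    intro c d hc hd hcb hdb hl
    rcases lt_trichotomy c d with h | rfl | h
    · exact lynBelow_mono hdb.le (List.Perm.refl _)
        (ihb d (by simp only [Set.mem_setOf_eq]; omega) hdb c hc hd h hl)
    · simp
    · have := lynBelow_mono hcb.le (List.perm_append_comm)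
        (ihb c (by simp only [Set.mem_setOf_eq]; omega) hcb d hd hc h (by omega))
      rw [← neg_sub]
      exact Submodule.neg_mem _ this
  have hsmall : (∀ u v : List (Fin 2), u ≠ [] → v ≠ [] → a = u ++ v → b ≤ v) →
      E a * E b - E b * E a ∈ lynBelow k E b (a ++ b) := by
    intro h
    have hlyn := lyn_append ha hbl hab
    rw [← hE2 a b hlyn.1 ha.1 hbl (std_append hbl h)]
    exact Submodule.subset_span ⟨a ++ b, hlyn.1, hlyn.2, List.Perm.refl _, rfl⟩
  by_cases h2 : 2 ≤ a.length
  swap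
  · apply hsmall
    rintro u v hu hv rfl
    have := List.length_pos_iff.2 hu
    have := List.length_pos_iff.2 hv
    simp at h2
    omega
  obtain ⟨l, r, rfl, hl0, hr0, hmin⟩ := exists_std ha h2
  by_cases hrb : b ≤ r
  · exact hsmall fun u v hu hv e => hrb.trans (hmin u v hu hv e)
  rw [not_le] at hrb
  obtain ⟨hl, hr, hlong⟩ := std_props ha hl0 hr0 hmin
  have hlb : l < b := lt_trans (lex_lt_app l hr0) hab
  have hlp := List.length_pos_iff.2 hl0
  have hrp := List.length_pos_iff.2 hr0
  rw [List.length_append] at hn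
  rw [hE2 l r ha hl0 hr hlong]
  have e : (E l * E r - E r * E l) * E b - E b * (E l * E r - E r * E l) =
      ((E l * E b - E b * E l) * E r - E r * (E l * E b - E b * E l)) +
      (E l * (E r * E b - E b * E r) - (E r * E b - E b * E r) * E l) := by noncomm_ring
  rw [e]
  have m1 := ihn (l.length + b.length) (by omega) b l hl hbl hlb rfl
  have m2 := ihn (r.length + b.length) (by omega) b r hr hbl hrb rfl
  apply Submodule.add_mem
  · refine span_bracket_mem m1 (Submodule.mem_span_singleton_self (E r)) ?_
    rintro _ ⟨g, h1, h2, h3, rfl⟩ _ rfl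
    have hlen := h3.length_eq
    rw [List.length_append] at hlen
    refine lynBelow_mono le_rfl ?_ (aux g r h1 hr h2 hrb (by omega))
    refine (h3.append_right r).trans ?_
    rw [List.append_assoc, List.append_assoc]
    exact (List.perm_append_comm).append_left l
  · refine span_bracket_mem (Submodule.mem_span_singleton_self (E l)) m2 ?_
    rintro _ rfl _ ⟨g, h1, h2, h3, rfl⟩
    have hlen := h3.length_eq
    rw [List.length_append] at hlen
    refine lynBelow_mono le_rfl ?_ (aux l g hl h1 hlb h2 (by omega))
    rw [List.append_assoc]
    exact h3.append_left l

/-- span of the basis elements of multidegree `(i, j)`. -/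
def lynDeg (k : Type*) [Field k] {A : Type*} [Ring A] [Algebra k A] (E : List (Fin 2) → A)
    (i j : ℕ) : Submodule k A :=
  Submodule.span k {a : A | ∃ g : List (Fin 2), IsLyndon g ∧ g.count 1 = i ∧ g.count 0 = j ∧ a = E g}

theorem lynBelow_le_lynDeg (E : List (Fin 2) → A) (b w : List (Fin 2)) :
    lynBelow k E b w ≤ lynDeg k E (w.count 1) (w.count 0) := by
  apply Submodule.span_mono
  rintro a ⟨g, h1, h2, h3, rfl⟩
  exact ⟨g, h1, h3.count_eq _, h3.count_eq _, rfl⟩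

theorem lyn_single (x : Fin 2) : IsLyndon [x] := by
  rw [lyn_iff]
  refine ⟨by simp, fun u v hu hv e => ?_⟩
  have := congrArg List.length e
  have := List.length_pos_iff.2 hu
  have := List.length_pos_iff.2 hv
  simp at *
  omega

theorem lynDeg_bracket (E : List (Fin 2) → A)
    (hE2 : ∀ αL αR : List (Fin 2), IsLyndon (αL ++ αR) → αL ≠ [] → IsLyndon αR →
      (∀ δ β' : List (Fin 2), αL ++ αR = β' ++ δ → β' ≠ [] → IsLyndon δ →
        δ.length ≤ αR.length) →
      E (αL ++ αR) = E αL * E αR - E αR * E αL) (c : Fin 2) (i j : ℕ) (y : A)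
    (hy : y ∈ lynDeg k E i j) :
    E [c] * y - y * E [c] ∈ lynDeg k E (i + [c].count 1) (j + [c].count 0) := by
  refine span_bracket_mem (Submodule.mem_span_singleton_self (E [c])) hy ?_
  rintro _ rfl _ ⟨g, h1, rfl, rfl, rfl⟩
  rcases lt_trichotomy [c] g with h | h | h
  · have := lynBelow_le_lynDeg E _ _ (key_bracket (k := k) E hE2 _ g [c] (lyn_single c) h1 h rfl)
    rw [List.count_append, List.count_append, add_comm, add_comm (List.count 0 [c])] at this
    exact this
  · rw [← h]; simp
  · have := lynBelow_le_lynDeg E _ _ (key_bracket (k := k) E hE2 _ [c] g h1 (lyn_single c) h rfl)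
    rw [List.count_append, List.count_append] at this
    rw [← neg_sub]
    exact Submodule.neg_mem _ this

end Key

section Jac
open Polynomial

theorem choose_pred_cast {k : Type*} [Field k] {p : ℕ} (hp : p.Prime) [CharP k p] :
    ∀ i : ℕ, i < p → ((p - 1).choose i : k) = (-1) ^ i := by
  intro i
  induction i with
  | zero => simp
  | succ i ih =>
    intro hi
    have h1 := ih (by omega)
    have h2 : ((p.choose (i + 1) : ℕ) : k) = 0 :=
      (CharP.cast_eq_zero_iff k p _).2 (hp.dvd_choose_self (by omega) hi)
    obtain ⟨q, rfl⟩ : ∃ q, p = q + 1 := ⟨p - 1, by have := hp.pos; omega⟩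
    rw [Nat.choose_succ_succ, Nat.cast_add] at h2
    simp only [Nat.add_sub_cancel] at h1 ⊢
    rw [h1] at h2
    rw [pow_succ]
    linear_combination h2

variable {k : Type*} [Field k] {A : Type*} [Ring A] [Algebra k A]

theorem sub_pow_pred {S : Type*} [Ring S] [Algebra k S] {p : ℕ} (hp : p.Prime) [CharP k p]
    {x y : S} (h : Commute x y) :
    (x - y) ^ (p - 1) = ∑ i ∈ Finset.range p, x ^ i * y ^ (p - 1 - i) := by
  have h' : Commute y (-x) := h.symm.neg_right
  have hpp := hp.pos
  have e : (x - y) ^ (p - 1) = (-1) ^ (p - 1) * (-x + y) ^ (p - 1) := by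
    rw [← neg_sub, neg_pow]; congr 2; abel
  have hcast : ∀ i, i < p → ((p - 1).choose i : S) = (-1) ^ i := by
    intro i hi
    have := congrArg (algebraMap k S) (choose_pred_cast (k := k) hp i hi)
    simpa using this
  have hsgn : ((-1 : S)) ^ (p - 1) = 1 := by
    have := hcast (p - 1) (by omega)
    simpa using this.symm
  rw [e, hsgn, one_mul, h'.symm.add_pow]
  rw [Nat.sub_add_cancel hpp]
  refine Finset.sum_congr rfl fun i hi => ?_
  rw [Finset.mem_range] at hi
  rw [hcast i hi, neg_pow x]
  have hc : Commute ((-1 : S) ^ i) (x ^ i * y ^ (p - 1 - i)) := (Commute.neg_one_left _).pow_left i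
  rw [mul_assoc, mul_assoc, ← mul_assoc (x ^ i), ← hc.eq, ← mul_assoc, ← pow_add, Even.neg_one_pow ⟨i, rfl⟩, one_mul]

theorem derivative_pow_nc (f : A[X]) (n : ℕ) :
    derivative (f ^ n) = ∑ i ∈ Finset.range n, f ^ i * derivative f * f ^ (n - 1 - i) := by
  induction n with
  | zero => simp
  | succ n ih =>
    rw [pow_succ, derivative_mul, ih, Finset.sum_range_succ, Finset.sum_mul]
    simp only [Nat.add_sub_cancel, Nat.sub_self, pow_zero, mul_one]
    congr 1
    refine Finset.sum_congr rfl fun i hi => ?_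
    rw [Finset.mem_range] at hi
    rw [mul_assoc, ← pow_succ]
    congr 2
    omega

/-- iterated bracket -/
noncomputable def adIter (f x : A[X]) : ℕ → A[X]
  | 0 => x
  | n + 1 => f * adIter f x n - adIter f x n * f

theorem adIter_pred {p : ℕ} (hp : p.Prime) [CharP k p] (f x : A[X]) :
    adIter f x (p - 1) = ∑ i ∈ Finset.range p, f ^ i * x * f ^ (p - 1 - i) := by
  have h1 : ∀ n, adIter f x n = ((LinearMap.mulLeft k f - LinearMap.mulRight k f) ^ n) x := by
    intro n
    induction n with
    | zero => simp [adIter]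
    | succ n ih =>
      rw [pow_succ', adIter, ih]
      simp
  rw [h1, sub_pow_pred (k := k) hp (LinearMap.commute_mulLeft_right f f)]
  rw [LinearMap.sum_apply]
  refine Finset.sum_congr rfl fun i _ => ?_
  rw [LinearMap.pow_mulLeft, LinearMap.pow_mulRight]
  simp [mul_assoc]

theorem coeff_lin_mul (a b : A) (g : A[X]) (i : ℕ) :
    ((C a * X + C b) * g).coeff (i + 1) = a * g.coeff i + b * g.coeff (i + 1) := by
  rw [add_mul, coeff_add, mul_assoc, coeff_C_mul, coeff_C_mul, X_mul, coeff_mul_X]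

theorem coeff_lin_mul_zero (a b : A) (g : A[X]) :
    ((C a * X + C b) * g).coeff 0 = b * g.coeff 0 := by
  rw [add_mul, coeff_add, mul_assoc, coeff_C_mul, coeff_C_mul, X_mul, coeff_mul_X_zero]
  simp

theorem coeff_mul_lin (a b : A) (g : A[X]) (i : ℕ) :
    (g * (C a * X + C b)).coeff (i + 1) = g.coeff i * a + g.coeff (i + 1) * b := by
  rw [mul_add, coeff_add, ← mul_assoc, coeff_mul_X, coeff_mul_C, coeff_mul_C]

theorem coeff_mul_lin_zero (a b : A) (g : A[X]) :
    (g * (C a * X + C b)).coeff 0 = g.coeff 0 * b := by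
  rw [mul_add, coeff_add, ← mul_assoc, coeff_mul_X_zero, coeff_mul_C]
  simp

theorem coeff_lin_pow (a b : A) (n : ℕ) : (∀ i j, i + j = n →
    ((C a * X + C b) ^ n).coeff i = SH a b i j) ∧
    ∀ i, n < i → ((C a * X + C b) ^ n).coeff i = 0 := by
  induction n with
  | zero =>
    constructor
    · intro i j h
      obtain ⟨rfl, rfl⟩ : i = 0 ∧ j = 0 := by omega
      simp [SH]
    · intro i hi
      simp [coeff_one]; omega
  | succ n ih =>
    obtain ⟨ih1, ih2⟩ := ih
    rw [pow_succ']
    constructor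
    · intro i j h
      rcases i with _ | i <;> rcases j with _ | j
      · omega
      · rw [coeff_lin_mul_zero, ih1 0 j (by omega), SH]
      · rw [coeff_lin_mul, ih1 i 0 (by omega), ih2 (i + 1) (by omega), SH]; simp
      · rw [coeff_lin_mul, ih1 i (j + 1) (by omega), ih1 (i + 1) j (by omega), SH]
    · intro i hi
      rcases i with _ | i
      · omega
      · rw [coeff_lin_mul, ih2 i (by omega), ih2 (i + 1) (by omega)]; simp

theorem add_pow_SH (a b : A) (n : ℕ) :
    (a + b) ^ n = ∑ i ∈ Finset.range (n + 1), SH a b i (n - i) := by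
  have h := coeff_lin_pow a b n
  let φ : A[X] →+* A := eval₂RingHom' (RingHom.id A) 1 (fun x => Commute.one_right x)
  have h1 : φ ((C a * X + C b) ^ n) = (a + b) ^ n := by
    rw [map_pow, map_add, map_mul]
    simp [φ, eval₂RingHom']
  rw [← h1]
  change eval₂ _ _ _ = _
  rw [eval₂_eq_sum_range' (n := n + 1)]
  · refine Finset.sum_congr rfl fun i hi => ?_
    rw [Finset.mem_range] at hi
    rw [h.1 i (n - i) (by omega)]; simp
  · rw [Nat.lt_succ_iff, natDegree_le_iff_coeff_eq_zero]
    exact h.2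

theorem SH_left (a b : A) (n : ℕ) : SH a b n 0 = a ^ n := by
  induction n with
  | zero => simp [SH]
  | succ n ih => rw [SH, ih, pow_succ']

theorem SH_right (a b : A) (n : ℕ) : SH a b 0 n = b ^ n := by
  induction n with
  | zero => simp [SH]
  | succ n ih => rw [SH, ih, pow_succ']

theorem coeff_adIter_mem (E : List (Fin 2) → A)
    (hE2 : ∀ αL αR : List (Fin 2), IsLyndon (αL ++ αR) → αL ≠ [] → IsLyndon αR →
      (∀ δ β' : List (Fin 2), αL ++ αR = β' ++ δ → β' ≠ [] → IsLyndon δ →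
        δ.length ≤ αR.length) →
      E (αL ++ αR) = E αL * E αR - E αR * E αL) (n : ℕ) :
    (∀ i j, i + j = n →
      (adIter (C (E [1]) * X + C (E [0])) (C (E [1])) n).coeff i ∈ lynDeg k E (i + 1) j) ∧
    ∀ i, n < i → (adIter (C (E [1]) * X + C (E [0])) (C (E [1])) n).coeff i = 0 := by
  have br1 := fun i j y hy => lynDeg_bracket (k := k) E hE2 1 i j y hy
  have br0 := fun i j y hy => lynDeg_bracket (k := k) E hE2 0 i j y hy
  have c1 : List.count (1 : Fin 2) [1] = 1 := by decide
  have c2 : List.count (0 : Fin 2) [1] = 0 := by decide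
  have c3 : List.count (1 : Fin 2) [0] = 0 := by decide
  have c4 : List.count (0 : Fin 2) [0] = 1 := by decide
  rw [c1, c2] at br1
  rw [c3, c4] at br0
  induction n with
  | zero =>
    constructor
    · intro i j h
      obtain ⟨rfl, rfl⟩ : i = 0 ∧ j = 0 := by omega
      rw [adIter, coeff_C_zero]
      exact Submodule.subset_span ⟨[1], lyn_single 1, c1, c2, rfl⟩
    · intro i hi
      rw [adIter, coeff_C, if_neg (by omega)]
  | succ n ih =>
    obtain ⟨ih1, ih2⟩ := ih
    rw [adIter]
    generalize adIter (C (E [1]) * X + C (E [0])) (C (E [1])) n = g at *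
    have split : ∀ i, ((C (E [1]) * X + C (E [0])) * g - g * (C (E [1]) * X + C (E [0]))).coeff
        (i + 1) = (E [1] * g.coeff i - g.coeff i * E [1]) +
          (E [0] * g.coeff (i + 1) - g.coeff (i + 1) * E [0]) := by
      intro i
      rw [coeff_sub, coeff_lin_mul, coeff_mul_lin]; abel
    constructor
    · intro i j h
      rcases i with _ | i
      · rcases j with _ | j
        · omega
        rw [coeff_sub, coeff_lin_mul_zero, coeff_mul_lin_zero]
        exact br0 _ _ _ (ih1 0 j (by omega))
      · rw [split]
        apply Submodule.add_mem
        · exact br1 _ _ _ (ih1 i j (by omega))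
        · rcases j with _ | j
          · rw [ih2 (i + 1) (by omega)]; simp
          · exact br0 _ _ _ (ih1 (i + 1) j (by omega))
    · intro i hi
      rcases i with _ | i
      · omega
      · rw [split, ih2 i (by omega), ih2 (i + 1) (by omega)]; simp

theorem SH_mem (E : List (Fin 2) → A) {p : ℕ} (hp : p.Prime) [CharP k p]
    (hE2 : ∀ αL αR : List (Fin 2), IsLyndon (αL ++ αR) → αL ≠ [] → IsLyndon αR →
      (∀ δ β' : List (Fin 2), αL ++ αR = β' ++ δ → β' ≠ [] → IsLyndon δ →
        δ.length ≤ αR.length) →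
      E (αL ++ αR) = E αL * E αR - E αR * E αL) (m : ℕ) (h1 : 1 ≤ m) (h2 : m ≤ p - 1) :
    SH (E [1]) (E [0]) m (p - m) ∈ lynDeg k E m (p - m) := by
  obtain ⟨i, rfl⟩ : ∃ i, m = i + 1 := ⟨m - 1, by omega⟩
  have hm := (coeff_adIter_mem (k := k) E hE2 (p - 1)).1 i (p - (i + 1)) (by omega)
  rw [adIter_pred (k := k) hp] at hm
  have hd : derivative (C (E [1]) * X + C (E [0])) = C (E [1]) := by simp
  have hd2 := derivative_pow_nc (C (E [1]) * X + C (E [0])) p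
  rw [hd] at hd2
  rw [← hd2, coeff_derivative, (coeff_lin_pow (E [1]) (E [0]) p).1 (i + 1) (p - (i + 1)) (by omega)]
    at hm
  have hne : ((i + 1 : ℕ) : k) ≠ 0 := by
    rw [Ne, CharP.cast_eq_zero_iff k p]
    intro h
    have := Nat.le_of_dvd (by omega) h
    have := hp.pos
    omega
  have e : SH (E [1]) (E [0]) (i + 1) (p - (i + 1)) * ((i : A) + 1) =
      ((i + 1 : ℕ) : k) • SH (E [1]) (E [0]) (i + 1) (p - (i + 1)) := by
    rw [Algebra.smul_def, map_natCast, ← (Nat.cast_commute _ _).eq.symm]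
    push_cast
    rfl
  rw [e] at hm
  exact (Submodule.smul_mem_iff _ hne).1 hm

end Jac

/-- In characteristic `p`: each middle shuffle type polynomial lies in the span of
Lyndon–Shirshov basis elements of the corresponding multidegree, and consequently
`(E₁+E₂)^p − E₁^p − E₂^p` lies in the span of the `E(α)` with `|α| = p`.
Alphabet is `Fin 2`, letter `1` is `0` and letter `2` is `1`. -/
theorem stmt_7 (k : Type*) [Field k] (p : ℕ) (hp : p.Prime) [CharP k p]
    (E : List (Fin 2) → FreeAlgebra k (Fin 2))
    (hE1 : ∀ x : Fin 2, E [x] = FreeAlgebra.ι k x)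
    (hE2 : ∀ αL αR : List (Fin 2), IsLyndon (αL ++ αR) → αL ≠ [] → IsLyndon αR →
      (∀ δ β' : List (Fin 2), αL ++ αR = β' ++ δ → β' ≠ [] → IsLyndon δ →
        δ.length ≤ αR.length) →
      E (αL ++ αR) = E αL * E αR - E αR * E αL) :
    (∀ m : ℕ, 1 ≤ m → m ≤ p - 1 →
      SH (E [1]) (E [0]) m (p - m) ∈ Submodule.span k
        {a : FreeAlgebra k (Fin 2) | ∃ α : List (Fin 2),
          IsLyndon α ∧ α.count 1 = m ∧ α.count 0 = p - m ∧ a = E α}) ∧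
    (E [0] + E [1]) ^ p - E [0] ^ p - E [1] ^ p ∈ Submodule.span k
      {a : FreeAlgebra k (Fin 2) | ∃ α : List (Fin 2),
        IsLyndon α ∧ α.length = p ∧ a = E α} := by
  have main := fun m h1 h2 => SH_mem (k := k) E hp hE2 m h1 h2
  refine ⟨main, ?_⟩
  obtain ⟨q, rfl⟩ : ∃ q, p = q + 1 := ⟨p - 1, by have := hp.pos; omega⟩
  have e : (E [0] + E [1]) ^ (q + 1) - E [0] ^ (q + 1) - E [1] ^ (q + 1) =
      ∑ i ∈ Finset.range q, SH (E [1]) (E [0]) (i + 1) (q + 1 - (i + 1)) := by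
    rw [add_comm (E [0]), add_pow_SH, Finset.sum_range_succ, Finset.sum_range_succ',
      Nat.sub_self, Nat.sub_zero, SH_left, SH_right]
    abel
  rw [e]
  refine Submodule.sum_mem _ fun i hi => ?_
  rw [Finset.mem_range] at hi
  refine Submodule.span_mono ?_ (main (i + 1) (by omega) (by omega))
  rintro _ ⟨g, h1, h2, h3, rfl⟩
  refine ⟨g, h1, ?_, rfl⟩
  have hlen : ∀ l : List (Fin 2), l.length = l.count 1 + l.count 0 := by
    intro l
    induction l with
    | nil => rfl
    | cons c t ih =>
      rw [List.length_cons, ih, List.count_cons, List.count_cons]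
      fin_cases c <;> simp <;> omega
  rw [hlen, h2, h3]
  omega
end
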